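/- Let G be the subgroup of the symmetric group on 44 points generated by the four permutations g1 = (1,2)(43,44), g2 = (1,2)(21,22), g3 = (1,39,13,43,25)(2,40,14,44,26)(3,37,15,41,27)(4,38,16,42,28)(5,35,23,17,31)(6,36,24,18,32)(7,33,21,19,29)(8,34,22,20,30), and g4 = (1,23,27,11,41)(2,24,28,12,42)(3,22,26,10,44,4,21,25,9,43)(5,16,20,40,32,6,15,19,39,31)(7,13,17,37,29)(8,14,18,38,30). Then the unique element of G that is not a commutator is the unique nonidentity element of the center Z(G) of G. -/

import Mathlib

/-- `(1,2)(43,44)` as a permutation of 44 points (the label `44` denotes `0 : Fin 44`). -/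
def g1 : Equiv.Perm (Fin 44) := c[1, 2] * c[43, 44]

/-- `(1,2)(21,22)`. -/
def g2 : Equiv.Perm (Fin 44) := c[1, 2] * c[21, 22]

/-- `(1,39,13,43,25)(2,40,14,44,26)(3,37,15,41,27)(4,38,16,42,28)(5,35,23,17,31)
(6,36,24,18,32)(7,33,21,19,29)(8,34,22,20,30)`. -/
def g3 : Equiv.Perm (Fin 44) :=
  c[1, 39, 13, 43, 25] * c[2, 40, 14, 44, 26] * c[3, 37, 15, 41, 27] * c[4, 38, 16, 42, 28] *
    c[5, 35, 23, 17, 31] * c[6, 36, 24, 18, 32] * c[7, 33, 21, 19, 29] * c[8, 34, 22, 20, 30]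

/-- `(1,23,27,11,41)(2,24,28,12,42)(3,22,26,10,44,4,21,25,9,43)
(5,16,20,40,32,6,15,19,39,31)(7,13,17,37,29)(8,14,18,38,30)`. -/
def g4 : Equiv.Perm (Fin 44) :=
  c[1, 23, 27, 11, 41] * c[2, 24, 28, 12, 42] * c[3, 22, 26, 10, 44, 4, 21, 25, 9, 43] *
    c[5, 16, 20, 40, 32, 6, 15, 19, 39, 31] * c[7, 13, 17, 37, 29] * c[8, 14, 18, 38, 30]

/-- `G_MacHale` is the subgroup generated by `g1`, `g2`, `g3`, `g4`. -/
def GMacHale : Subgroup (Equiv.Perm (Fin 44)) := Subgroup.closure {g1, g2, g3, g4}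

namespace MH


def opsD : List (ℕ × ℕ) := [(1, 1), (2, 1), (1, 2), (2, 2), (1, 3), (1, 4), (2, 6), (1, 8), (1,
   6), (2, 7), (11, 11), (12, 11), (11, 12), (12, 12), (11, 13), (11, 15), (12, 18), (1, 9), (2,
   20), (1, 21), (1, 22), (1, 5), (1, 24), (2, 25), (1, 26), (1, 27), (1, 28), (23, 23), (29, 29),
   (29, 30), (23, 31), (29, 31), (23, 33), (2, 5), (1, 36), (2, 37), (1, 38), (2, 39), (2, 40),
   (1, 41), (2, 42), (2, 4), (1, 44), (1, 45), (1, 46), (1, 47), (2, 48), (2, 49), (1, 50), (2,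
   51), (43, 43), (52, 43), (43, 52), (43, 53), (52, 53), (8, 13), (58, 33), (59, 54), (59, 52),
   (59, 56), (59, 53), (59, 43), (7, 33), (65, 43), (59, 57), (58, 53), (2, 17), (69, 31), (70,
   55), (9, 14), (72, 32), (73, 43), (1, 15), (75, 32), (76, 53), (3, 18), (78, 29), (58, 43), (6,
   32), (81, 57), (10, 35), (83, 43), (8, 15), (85, 34), (86, 43), (6, 15), (88, 56), (6, 12), (1,
   14), (91, 30), (11, 35), (4, 15), (94, 29), (2, 16), (96, 23), (2, 14), (7, 18), (99, 30),
   (100, 57), (8, 17), (4, 30), (103, 43), (5, 12), (10, 19), (106, 31), (107, 56), (3, 19), (109,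
   35), (110, 43), (4, 14), (112, 34), (113, 56), (10, 16), (115, 34), (2, 15), (117, 29), (118,
   43), (96, 34), (120, 43), (10, 14), (122, 31), (123, 54), (5, 16), (125, 34), (126, 43), (3,
   11), (128, 34), (129, 55), (128, 32), (131, 54), (6, 17), (85, 29), (9, 17), (10, 15), (136,
   29), (137, 54), (7, 14), (139, 31), (140, 52)]

def T1 : List ℕ := [877989843404692497019985071278112, 169209111676100301521860618955874,
   503542691847558710997650669915269, 2124626134573762628215451757798,
   754335487410895737841321169834280, 41177038664458503184627514154315,
   419675967928933375637130193413517, 168926101632934291034424512890319,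
   168681191629677062489514206077457, 503504076068708394514130431133267,
   794041335575462205595615871935125]

def T2 : List ℕ := [877989843404692497019985071278112, 543411831065795725684304348582944,
   710006251810926524735496839731232, 587126006975868154515222377538561,
   336583116423757206312974490642433, 670670388103259915266846155517984,
   375918262501567112712375836850177, 838654181312259601052217279823904,
   626384124041634932067479664052225, 85380923086698029575726091097120]

def T3 : List ℕ := [877989843404692497019985071278112, 419795931080544658970611181258784,
   877706077943484760320152731454465, 877499262438292378885753081498625,
   710659846752659936909026617527297, 420084089081784157625806318831648,
   877787580562640073073280550012960, 626668330178927478415466718922753,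
   626466466282847433157893793351681]

def T4 : List ℕ := [877989843404692497019985071278112, 459501577354611341897646117849089,
   626749593352999258149666390346784, 375673309988823490100847231175712,
   542921325520154126885553444063233, 292417049852876359277929618803713,
   710169899263384235370782121887776, 794242800645753973316275176279041]

def RL : List ℕ := [838692318050135363001593599529058, 41383855022535354138978450281539,
   503951132234856153493682888250466, 710496279401018358159480359915587,
   420084487908140524086684065894467, 626629635390391998695007214244962,
   793877368930142551883700601230403, 543329845810960811030507402989666,
   420367859497818223829756011380834]

def KT : List (ℕ × ℕ) := [(877989843404692497019985071278112, 838692318050135363001593599529058),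
   (877989843404692497019985071278112, 41383855022535354138978450281539),
   (877989843404692497019985071278112, 503951132234856153493682888250466),
   (877989843404692497019985071278112, 710496279401018358159480359915587),
   (877989843404692497019985071278112, 420084487908140524086684065894467),
   (877989843404692497019985071278112, 626629635390391998695007214244962),
   (85669724932489038693826411374229, 420084487908140524086684065894467),
   (877989843404692497019985071278112, 793877368930142551883700601230403),
   (877989843404692497019985071278112, 543329845810960811030507402989666),
   (375917863047211577119247011761483, 543329845810960811030507402989666),
   (793915984709063755605897444852869, 543329845810960811030507402989666),
   (1595823732440993046188728331890, 710496279401018358159480359915587),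
   (85751067469931951046896289004774, 710496279401018358159480359915587),
   (292090233760728659985322651817027, 543329845810960811030507402989666),
   (208631311681902262007965372655020, 710496279401018358159480359915587),
   (41056362792239365447902511244848, 710496279401018358159480359915587),
   (877989843404692497019985071278112, 420367859497818223829756011380834),
   (877499262438292378885753081498625, 420367859497818223829756011380834)]

def FT : List (ℕ × ℕ × ℕ × ℕ) := [(838692318050135363001593599529058,
   41013072325864173907795565364652, 754335487410895737841321169834280, 5),
   (41383855022535354138978450281539, 291599610756733810355885398101420,
   168926101632934291034424512890319, 17), (503951132234856153493682888250466,
   503869151229583577229678877901395, 503504076068708394514130431133267, 1025),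
   (710496279401018358159480359915587, 169373317377289238186880023377921,
   292253205267398689672786837124559, 1025), (420084487908140524086684065894467,
   793915707709253024428267224617322, 41177038664458503184627514154315, 17),
   (626629635390391998695007214244962, 670872251688231306112842778972491,
   169209111676100301521860618955874, 5), (793877368930142551883700601230403,
   336539112733037128104476716141236, 877950988295057314978999291102306, 17),
   (543329845810960811030507402989666, 458891272837324081926530309603822,
   710376597617218504909842391567625, 5)]

def ivO : List (ℕ × ℕ × ℕ) := [(1682085, 587659239862170426463987905567280,
   877297557496915813087539662042311), (2467157, 710375879556410006538617676443087,
   877297557496915813087539662042311), (1677658, 587659601564331610926183252787760,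
   877297557496915813087539662042311), (1464917, 877744214561248413229683623641419,
   877297557496915813087539662042311)]

def IP : List (ℕ × ℕ) := [(4, 877989843404692497019985071278112), (9,
   710414213229690295500398989594955), (6, 124597026078758024389689948454448)]

def OT : List (ℕ × ℕ) := [(1480105, 877989843404692497019985071278112), (1682085,
   503504076068708394514130431133267), (1464917, 41177038664458503184627514154315), (1729894,
   2124626134573762628215451757798), (2779545, 754335487410895737841321169834280), (2533994,
   794041335575462205595615871935125), (1677658, 292253205267398689672786837124559), (2447782,
   252263788697106341931457893055916), (2467157, 838365778567481949686569448244322), (1402522,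
   336375822110094408610166130968740), (2791062, 542882592589524807776042236889617), (2709097,
   754782303861685151205548163800725)]

def cs : ℕ := 458929851336404032127618942121256

def csi : ℕ := 169252997789264264515121104367218

def ctr : ℕ := 420367859497818223829756011380834

def cal : ℕ := 41138785284663040944290858026183

def cbe : ℕ := 85136130193330338425369125209287

def cde : ℕ := 626384124041634932067479664052225

def mO : ℕ := 1480105

def BP : List ℕ := [0, 3, 5, 9, 17, 33, 65, 129, 0, 768, 1025, 2049, 4097, 8193, 16385, 32769,
   65537, 131073, 262145, 524289, 1048577, 2097153]

def BO : List ℕ := [0, 0, 6, 9, 18, 33, 66, 129, 257, 514, 1025, 2050, 4097, 8194, 16386, 32769,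
   65538, 131073, 262145, 524290, 1048577, 2097154]

def BD : List ℕ := [0, 0, 0, 0, 60, 0, 192, 0, 780, 0, 0, 0, 12300, 0, 49164, 0, 196620, 0,
   786444, 0, 3145740, 0]

def WO : List ℕ := [0, 0, 2094507, 1050024, 1480697, 1479689, 576, 384, 1479849, 1480617, 430089,
   614406, 425985, 606210, 2069931, 1086888, 524290, 262145, 1480104, 1480107, 1048992, 2096559]

def WD : List ℕ := [0, 0, 0, 0, 786480, 0, 1088, 0, 196620, 0, 0, 0, 197388, 0, 209676, 0, 12, 0,
   786432, 0, 258828, 0]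

def VP : List ℕ := [0, 195, 267, 459, 129, 130, 201, 9, 0, 258, 459, 264, 384, 387, 3019, 1796,
   4738, 8833, 219, 43, 201, 6]

def WP : List ℕ := [0, 8160, 267, 7912, 6304, 1856, 6376, 1995, 0, 1856, 6568, 1611, 288, 7920,
   8160, 0, 1632, 6576, 8104, 139, 6304, 1856]

def PT : List ℕ := [1768, 1422, 1876, 1683, 473, 246, 826, 1379, 1085, 933, 591]

def ST : List (ℕ × List ℕ) := [(838692318050135363001593599529058, [265471]),
   (41383855022535354138978450281539, [1746521]), (503951132234856153493682888250466, [1402522]),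
   (710496279401018358159480359915587, [2229248]), (420084487908140524086684065894467, [1321216]),
   (626629635390391998695007214244962, [1032499]), (793877368930142551883700601230403, [3153715]),
   (543329845810960811030507402989666, [1135914]), (420367859497818223829756011380834, [266496,
   532736, 528640, 3161359, 250639, 263167, 270592])]

end MH

namespace MH

open Equiv

def lk (c i : ℕ) : ℕ := (c >>> (5 * i)) % 32

def mk5 (f : ℕ → ℕ) : ℕ → ℕ → ℕ
  | 0, _ => 0
  | n + 1, i => f i + 32 * mk5 f n (i + 1)

def mulc (c d : ℕ) : ℕ := mk5 (fun i => lk c (lk d i)) 22 0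

theorem lk_lt (c i : ℕ) : lk c i < 32 := Nat.mod_lt _ (by norm_num)

theorem lk_zero (a b : ℕ) (h : a < 32) : lk (a + 32 * b) 0 = a := by
  simp only [lk, Nat.mul_zero, Nat.shiftRight_zero]; omega

theorem lk_succ (a b j : ℕ) (h : a < 32) : lk (a + 32 * b) (j + 1) = lk b j := by
  simp only [lk, Nat.shiftRight_eq_div_pow]
  have : 2 ^ (5 * (j + 1)) = 32 * 2 ^ (5 * j) := by rw [Nat.mul_add, pow_add]; norm_num; ring
  rw [this, ← Nat.div_div_eq_div_mul]
  congr 2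
  omega

theorem lk_mk5 (f : ℕ → ℕ) (hf : ∀ i, f i < 32) :
    ∀ n i j, j < n → lk (mk5 f n i) j = f (i + j) := by
  intro n
  induction n with
  | zero => intro i j h; omega
  | succ n ih =>
    intro i j h
    cases j with
    | zero => simp only [mk5]; rw [lk_zero _ _ (hf i)]; simp
    | succ j =>
      simp only [mk5]; rw [lk_succ _ _ _ (hf i), ih _ _ (by omega)]; congr 1; omega

theorem mk5_congr (f g : ℕ → ℕ) : ∀ n i, (∀ j, i ≤ j → j < i + n → f j = g j) →
    mk5 f n i = mk5 g n i := by
  intro n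
  induction n with
  | zero => intro i _; rfl
  | succ n ih =>
    intro i h
    simp only [mk5]
    rw [h i le_rfl (by omega), ih (i + 1) (fun j h1 h2 => h j (by omega) (by omega))]

def code (σ : Perm (Fin 22)) : ℕ :=
  mk5 (fun i => if h : i < 22 then (σ ⟨i, h⟩ : ℕ) else 0) 22 0

theorem lk_code (σ : Perm (Fin 22)) (i : Fin 22) : lk (code σ) i = σ i := by
  rw [code, lk_mk5 _ _ _ _ _ i.2]
  · simp
  · intro i; split
    · exact lt_trans (Fin.is_lt _) (by norm_num)
    · norm_num

theorem code_mul (σ τ : Perm (Fin 22)) : code (σ * τ) = mulc (code σ) (code τ) := by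
  unfold mulc
  rw [code]
  apply mk5_congr
  intro j _ h
  have hj : j < 22 := by omega
  simp only [hj, dif_pos]
  have := lk_code τ ⟨j, hj⟩
  simp only at this
  rw [this, lk_code]; rfl

theorem code_inj {σ τ : Perm (Fin 22)} (h : code σ = code τ) : σ = τ := by
  ext i
  rw [← lk_code, ← lk_code, h]

def σ3 : Perm (Fin 22) :=
  ⟨![19, 18, 17, 16, 4, 5, 21, 20, 15, 14, 9, 8, 0, 1, 3, 2, 10, 11, 7, 6, 13, 12],
   ![12, 13, 15, 14, 4, 5, 19, 18, 11, 10, 16, 17, 21, 20, 9, 8, 3, 2, 1, 0, 7, 6],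
   by decide, by decide⟩

def σ4 : Perm (Fin 22) :=
  ⟨![11, 10, 7, 6, 21, 20, 8, 9, 18, 19, 12, 13, 4, 5, 3, 2, 16, 17, 14, 15, 0, 1],
   ![20, 21, 15, 14, 12, 13, 3, 2, 6, 7, 1, 0, 10, 11, 18, 19, 16, 17, 8, 9, 5, 4],
   by decide, by decide⟩

def M : Subgroup (Perm (Fin 22)) := Subgroup.closure {σ3, σ4}

theorem σ3_mem : σ3 ∈ M := Subgroup.subset_closure (by simp)
theorem σ4_mem : σ4 ∈ M := Subgroup.subset_closure (by simp)

attribute [irreducible] mulc code lk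

def InM (c : ℕ) : Prop := ∃ σ ∈ M, code σ = c

theorem InM.mul {c d : ℕ} (hc : InM c) (hd : InM d) : InM (mulc c d) := by
  obtain ⟨σ, h, rfl⟩ := hc
  obtain ⟨τ, h', rfl⟩ := hd
  exact ⟨σ * τ, M.mul_mem h h', code_mul _ _⟩

def runS : List (ℕ × ℕ) → List ℕ → List ℕ
  | [], acc => acc
  | (i, j) :: r, acc => runS r (acc ++ [mulc (acc.getD i (code 1)) (acc.getD j (code 1))])

theorem getD_InM {acc : List ℕ} (h : ∀ c ∈ acc, InM c) (i : ℕ) : InM (acc.getD i (code 1)) := by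
  rw [List.getD_eq_getElem?_getD]
  cases hh : acc[i]? with
  | none => exact ⟨1, M.one_mem, rfl⟩
  | some c => exact h c (List.mem_of_getElem? hh)

theorem runS_InM : ∀ (ops : List (ℕ × ℕ)) (acc : List ℕ), (∀ c ∈ acc, InM c) →
    ∀ c ∈ runS ops acc, InM c := by
  intro ops
  induction ops with
  | nil => intro acc h; exact h
  | cons p r ih =>
    intro acc h
    obtain ⟨i, j⟩ := p
    apply ih
    intro c hc
    rcases List.mem_append.1 hc with hc | hc
    · exact h c hc
    · rw [List.mem_singleton] at hc; rw [hc]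
      exact (getD_InM h i).mul (getD_InM h j)

def c1 : ℕ := mk5 (fun i => i) 22 0
def allL : List ℕ := T1 ++ T2 ++ T3 ++ T4 ++ RL ++ KT.map Prod.fst ++ FT.map (fun x => x.2.1) ++
  FT.map (fun x => x.2.2.1) ++ ivO.map (fun x => x.2.1) ++ ivO.map (fun x => x.2.2) ++
  IP.map (fun x => x.2) ++ OT.map (fun x => x.2) ++ [cs, ctr, cal, cbe, cde, c1]

theorem code_one : code 1 = c1 := by
  unfold code c1
  apply mk5_congr
  intro j _ h
  have hj : j < 22 := by omega
  simp [hj]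

def slp : List ℕ := runS opsD [c1, code σ3, code σ4]

theorem slp_InM : ∀ c ∈ slp, InM c := by
  apply runS_InM
  intro c hc
  simp only [List.mem_cons, List.not_mem_nil, or_false] at hc
  rcases hc with rfl | rfl | rfl
  · exact ⟨1, M.one_mem, code_one⟩
  · exact ⟨σ3, σ3_mem, rfl⟩
  · exact ⟨σ4, σ4_mem, rfl⟩

theorem all_slp : allL.all (fun c => slp.any (fun d => Nat.beq c d)) = true := by decide +kernel

theorem all_InM : ∀ c ∈ allL, InM c := by
  intro c hc
  have := List.all_eq_true.1 all_slp c hc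
  obtain ⟨d, hd, h⟩ := List.any_eq_true.1 this
  rw [Nat.eq_of_beq_eq_true h]
  exact slp_InM d hd

end MH

namespace MH

open Equiv

/-! ### the stabilizer chain -/

def gd (p t x k : ℕ) : Bool := Nat.beq (lk p (lk t (2 * k)) / 2) (lk x (2 * k) / 2)

def S3 (x : ℕ) : Bool := T3.any fun t => gd c1 t x 2 && T4.any fun y => Nat.beq (mulc t y) x
def S2 (x : ℕ) : Bool := T2.any fun t2 => gd c1 t2 x 1 && T3.any fun t3 => gd t2 t3 x 2 &&
  T4.any fun t4 => Nat.beq (mulc t2 (mulc t3 t4)) x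
def S1 (x : ℕ) : Bool := T1.any fun t1 => gd c1 t1 x 0 && T2.any fun t2 => gd t1 t2 x 1 &&
  T3.any fun t3 => gd (mulc t1 t2) t3 x 2 &&
  T4.any fun t4 => Nat.beq (mulc t1 (mulc t2 (mulc t3 t4))) x

def X4 : Set (Perm (Fin 22)) := {σ | code σ ∈ T4}
def ext (T : List ℕ) (X : Set (Perm (Fin 22))) : Set (Perm (Fin 22)) :=
  {σ | ∃ t y, t ∈ M ∧ code t ∈ T ∧ y ∈ X ∧ σ = t * y}
def X3 := ext T3 X4
def X2 := ext T2 X3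
def X1 := ext T1 X2

def Cl (X : Set (Perm (Fin 22))) : Set (Perm (Fin 22)) := {s | ∀ x ∈ X, s * x ∈ X}

theorem Cl.mul {X : Set (Perm (Fin 22))} {a b : Perm (Fin 22)} (ha : a ∈ Cl X) (hb : b ∈ Cl X) :
    a * b ∈ Cl X := fun x hx => by rw [mul_assoc]; exact ha _ (hb _ hx)

theorem mem_InM {c : ℕ} (h : c ∈ allL) : ∃ σ ∈ M, code σ = c := all_InM c h

theorem T1M {c : ℕ} (h : c ∈ T1) : ∃ σ ∈ M, code σ = c := mem_InM (by simp [allL, h])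
theorem T2M {c : ℕ} (h : c ∈ T2) : ∃ σ ∈ M, code σ = c := mem_InM (by simp [allL, h])
theorem T3M {c : ℕ} (h : c ∈ T3) : ∃ σ ∈ M, code σ = c := mem_InM (by simp [allL, h])
theorem T4M {c : ℕ} (h : c ∈ T4) : ∃ σ ∈ M, code σ = c := mem_InM (by simp [allL, h])

theorem X4_of {σ : Perm (Fin 22)} (h : T4.any (fun y => Nat.beq y (code σ)) = true) : σ ∈ X4 := by
  obtain ⟨y, hy, h⟩ := List.any_eq_true.1 h
  have := Nat.eq_of_beq_eq_true h
  subst this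
  exact hy

theorem X3_of {σ : Perm (Fin 22)} (h : S3 (code σ) = true) : ∃ t y, t ∈ M ∧ code t ∈ T3 ∧ y ∈ X4 ∧
    σ = t * y := by
  simp only [S3, List.any_eq_true, Bool.and_eq_true] at h
  obtain ⟨t, ht, _, y, hy, h⟩ := h
  obtain ⟨t, htM, rfl⟩ := T3M ht
  obtain ⟨y, hyM, rfl⟩ := T4M hy
  have := Nat.eq_of_beq_eq_true h
  rw [← code_mul] at this
  exact ⟨t, y, htM, ht, hy, (code_inj this).symm⟩

theorem X2_of {σ : Perm (Fin 22)} (h : S2 (code σ) = true) : ∃ t y, t ∈ M ∧ code t ∈ T2 ∧ y ∈ X3 ∧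
    σ = t * y := by
  simp only [S2, List.any_eq_true, Bool.and_eq_true] at h
  obtain ⟨s, hs, _, t, ht, _, y, hy, h⟩ := h
  obtain ⟨s, hsM, rfl⟩ := T2M hs
  obtain ⟨t, htM, rfl⟩ := T3M ht
  obtain ⟨y, hyM, rfl⟩ := T4M hy
  have := Nat.eq_of_beq_eq_true h
  rw [← code_mul, ← code_mul] at this
  exact ⟨s, t * y, hsM, hs, ⟨t, y, htM, ht, hy, rfl⟩, (code_inj this).symm⟩

theorem X1_of {σ : Perm (Fin 22)} (h : S1 (code σ) = true) : ∃ t y, t ∈ M ∧ code t ∈ T1 ∧ y ∈ X2 ∧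
    σ = t * y := by
  simp only [S1, List.any_eq_true, Bool.and_eq_true] at h
  obtain ⟨r, hr, _, s, hs, _, t, ht, _, y, hy, h⟩ := h
  obtain ⟨r, hrM, rfl⟩ := T1M hr
  obtain ⟨s, hsM, rfl⟩ := T2M hs
  obtain ⟨t, htM, rfl⟩ := T3M ht
  obtain ⟨y, hyM, rfl⟩ := T4M hy
  have := Nat.eq_of_beq_eq_true h
  rw [← code_mul, ← code_mul, ← code_mul] at this
  exact ⟨r, s * (t * y), hrM, hr, ⟨s, t * y, hsM, hs, ⟨t, y, htM, ht, hy, rfl⟩, rfl⟩,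
    (code_inj this).symm⟩

theorem ck4 : T4.all (fun s => T4.all fun t => T4.any fun y => Nat.beq y (mulc s t)) = true := by
  decide +kernel
theorem ck3 : (T3 ++ T4).all (fun s => T3.all fun t => S3 (mulc s t)) = true := by
  decide +kernel
theorem ck2 : (T2 ++ T3 ++ T4).all (fun s => T2.all fun t => S2 (mulc s t)) = true := by
  decide +kernel
theorem ck1 : ([code σ3, code σ4, code σ3⁻¹, code σ4⁻¹]).all
    (fun s => T1.all fun t => S1 (mulc s t)) = true := by
  decide +kernel
theorem ck0 : (T1.any (fun y => Nat.beq y c1) && T2.any (fun y => Nat.beq y c1) &&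
  T3.any (fun y => Nat.beq y c1) && T4.any (fun y => Nat.beq y c1)) = true := by
  decide +kernel

theorem cl4 {s : Perm (Fin 22)} (h : code s ∈ T4) : s ∈ Cl X4 := by
  intro x hx
  have := List.all_eq_true.1 (List.all_eq_true.1 ck4 _ h) _ hx
  rw [← code_mul] at this
  exact X4_of this

theorem cl3 {s : Perm (Fin 22)} (h : code s ∈ T3 ++ T4) : s ∈ Cl X3 := by
  rintro x ⟨t, y, htM, ht, hy, rfl⟩
  have := List.all_eq_true.1 (List.all_eq_true.1 ck3 _ h) _ ht
  rw [← code_mul] at this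
  obtain ⟨t', y', h1, h2, h3, h4⟩ := X3_of this
  rw [← mul_assoc, h4, mul_assoc]
  exact ⟨t', y' * y, h1, h2, cl4 h3 _ hy, rfl⟩

theorem X3_cl {s : Perm (Fin 22)} (h : s ∈ X3) : s ∈ Cl X3 := by
  obtain ⟨t, y, htM, ht, hy, rfl⟩ := h
  exact Cl.mul (cl3 (List.mem_append_left _ ht)) (cl3 (List.mem_append_right _ hy))

theorem cl2 {s : Perm (Fin 22)} (h : code s ∈ T2 ++ T3 ++ T4) : s ∈ Cl X2 := by
  rintro x ⟨t, y, htM, ht, hy, rfl⟩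
  have := List.all_eq_true.1 (List.all_eq_true.1 ck2 _ h) _ ht
  rw [← code_mul] at this
  obtain ⟨t', y', h1, h2, h3, h4⟩ := X2_of this
  rw [← mul_assoc, h4, mul_assoc]
  exact ⟨t', y' * y, h1, h2, X3_cl h3 _ hy, rfl⟩

theorem X2_cl {s : Perm (Fin 22)} (h : s ∈ X2) : s ∈ Cl X2 := by
  obtain ⟨t, y, htM, ht, ⟨t', y', _, ht', hy', rfl⟩, rfl⟩ := h
  exact Cl.mul (cl2 (by simp [ht]))
    (Cl.mul (cl2 (by simp [ht'])) (cl2 (List.mem_append_right _ hy')))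

theorem cl1 {s : Perm (Fin 22)} (h : code s ∈ [code σ3, code σ4, code σ3⁻¹, code σ4⁻¹]) :
    s ∈ Cl X1 := by
  rintro x ⟨t, y, htM, ht, hy, rfl⟩
  have := List.all_eq_true.1 (List.all_eq_true.1 ck1 _ h) _ ht
  rw [← code_mul] at this
  obtain ⟨t', y', h1, h2, h3, h4⟩ := X1_of this
  rw [← mul_assoc, h4, mul_assoc]
  exact ⟨t', y' * y, h1, h2, X2_cl h3 _ hy, rfl⟩

theorem one_X1 : (1 : Perm (Fin 22)) ∈ X1 := by
  have := ck0
  simp only [List.any_eq_true, Bool.and_eq_true] at this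
  obtain ⟨⟨⟨⟨a, ha, ha'⟩, ⟨b, hb, hb'⟩⟩, ⟨c, hc, hc'⟩⟩, ⟨d, hd, hd'⟩⟩ := this
  rw [Nat.eq_of_beq_eq_true ha', ← code_one] at ha
  rw [Nat.eq_of_beq_eq_true hb', ← code_one] at hb
  rw [Nat.eq_of_beq_eq_true hc', ← code_one] at hc
  rw [Nat.eq_of_beq_eq_true hd', ← code_one] at hd
  exact ⟨1, 1, M.one_mem, ha, ⟨1, 1, M.one_mem, hb, ⟨1, 1, M.one_mem, hc, hd, rfl⟩, rfl⟩, rfl⟩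

theorem M_X1 {σ : Perm (Fin 22)} (h : σ ∈ M) : σ ∈ X1 := by
  induction h using Subgroup.closure_induction_left with
  | one => exact one_X1
  | mul_left x hx y hy ih =>
    rcases hx with rfl | rfl
    · exact cl1 (by simp) _ ih
    · exact cl1 (by simp) _ ih
  | inv_mul_cancel x hx y hy ih =>
    rcases hx with rfl | rfl
    · exact cl1 (by simp) _ ih
    · exact cl1 (by simp) _ ih

/-! ### blocks -/

def BPr (σ : Perm (Fin 22)) : Prop := ∀ i j : Fin 22, (i : ℕ) / 2 = j / 2 ↔ (σ i : ℕ) / 2 = σ j / 2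

theorem M_BPr {σ : Perm (Fin 22)} (h : σ ∈ M) : BPr σ := by
  induction h using Subgroup.closure_induction with
  | mem x hx =>
    rcases hx with rfl | rfl
    · unfold BPr; decide +kernel
    · unfold BPr; decide +kernel
  | one => intro i j; rfl
  | mul x y _ _ hx hy => intro i j; rw [hy i j, hx]; rfl
  | inv x _ hx => intro i j; rw [hx (x⁻¹ i) (x⁻¹ j)]; simp

def pt (k : Fin 11) : Fin 22 := ⟨2 * k, by omega⟩
def bk (i : Fin 22) : Fin 11 := ⟨i / 2, by omega⟩
def bl (σ : Perm (Fin 22)) (k : Fin 11) : Fin 11 := bk (σ (pt k))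

theorem bk_pt (k : Fin 11) : bk (pt k) = k := by ext; simp [bk, pt]

theorem bl_bk {σ : Perm (Fin 22)} (h : σ ∈ M) (i : Fin 22) : bl σ (bk i) = bk (σ i) := by
  have := (M_BPr h (pt (bk i)) i).1 (by simp [pt, bk])
  ext; exact this

theorem bl_mul {σ τ : Perm (Fin 22)} (h : σ ∈ M) (k : Fin 11) : bl (σ * τ) k = bl σ (bl τ k) := by
  conv_rhs => rw [bl.eq_def τ]
  rw [bl_bk h]; rfl

theorem bl_one (k : Fin 11) : bl 1 k = k := bk_pt k

theorem bl_inv {σ : Perm (Fin 22)} (h : σ ∈ M) {a b : Fin 11} (hab : bl σ a = b) : bl σ⁻¹ b = a := by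
  rw [← hab, ← bl_mul (M.inv_mem h), inv_mul_cancel, bl_one]

theorem bl_inj {σ : Perm (Fin 22)} (h : σ ∈ M) : Function.Injective (bl σ) := by
  intro a b hab
  have := bl_inv h hab
  rw [bl_inv h rfl] at this
  exact this.symm

theorem bl_code (σ : Perm (Fin 22)) (k : Fin 11) : (bl σ k : ℕ) = lk (code σ) (2 * k) / 2 := by
  have := lk_code σ (pt k)
  simp only [pt] at this
  rw [this]; rfl

theorem ckT : (T2.all (fun t => Nat.beq (lk t 0 / 2) 0) &&
    T3.all (fun t => Nat.beq (lk t 0 / 2) 0 && Nat.beq (lk t 2 / 2) 1) &&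
    T4.all (fun t => Nat.beq (lk t 0 / 2) 0 && Nat.beq (lk t 2 / 2) 1 && Nat.beq (lk t 4 / 2) 2))
    = true := by decide +kernel

theorem beq_iff (a b : ℕ) : Nat.beq a b = true ↔ a = b := by
  constructor
  · exact Nat.eq_of_beq_eq_true
  · rintro rfl; exact Nat.beq_refl a

theorem T2f {t : Perm (Fin 22)} (h : code t ∈ T2) : bl t 0 = 0 := by
  have := ckT
  simp only [List.all_eq_true, Bool.and_eq_true, beq_iff] at this
  ext; rw [bl_code]; exact this.1.1 _ h

theorem T3f {t : Perm (Fin 22)} (h : code t ∈ T3) : bl t 0 = 0 ∧ bl t 1 = 1 := by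
  have := ckT
  simp only [List.all_eq_true, Bool.and_eq_true, beq_iff] at this
  constructor <;> (ext; rw [bl_code])
  · exact (this.1.2 _ h).1
  · exact (this.1.2 _ h).2

theorem T4f {t : Perm (Fin 22)} (h : code t ∈ T4) : bl t 0 = 0 ∧ bl t 1 = 1 ∧ bl t 2 = 2 := by
  have := ckT
  simp only [List.all_eq_true, Bool.and_eq_true, beq_iff] at this
  refine ⟨?_, ?_, ?_⟩ <;> (ext; rw [bl_code])
  · exact (this.2 _ h).1.1
  · exact (this.2 _ h).1.2
  · exact (this.2 _ h).2

theorem enum {σ : Perm (Fin 22)} (h : σ ∈ M) : ∃ a ∈ T1, ∃ b ∈ T2, ∃ c ∈ T3, ∃ d ∈ T4,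
    code σ = mulc (mulc (mulc a b) c) d ∧
    (bl σ 0 : ℕ) = lk a 0 / 2 ∧
    (bl σ 0 : ℕ) = lk (mulc a b) 0 / 2 ∧ (bl σ 1 : ℕ) = lk (mulc a b) 2 / 2 ∧
    (bl σ 0 : ℕ) = lk (mulc (mulc a b) c) 0 / 2 ∧ (bl σ 1 : ℕ) = lk (mulc (mulc a b) c) 2 / 2 ∧
    (bl σ 2 : ℕ) = lk (mulc (mulc a b) c) 4 / 2 := by
  obtain ⟨a, y, haM, ha, ⟨b, y', hbM, hb, ⟨c, d, hcM, hc, hd, rfl⟩, rfl⟩, rfl⟩ := M_X1 h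
  have hab := M.mul_mem haM hbM
  have habc := M.mul_mem hab hcM
  obtain ⟨d0, d1, d2⟩ := T4f hd
  obtain ⟨c0, e1⟩ := T3f hc
  have b0 := T2f hb
  refine ⟨_, ha, _, hb, _, hc, _, hd, ?_, ?_⟩
  · rw [← code_mul, ← code_mul, ← code_mul]; simp only [mul_assoc]
  rw [← code_mul, ← code_mul]
  have e : a * (b * (c * d)) = a * b * c * d := by simp only [mul_assoc]
  have k0 : bl (a * (b * (c * d))) 0 = bl (a * b * c) 0 := by rw [e, bl_mul habc, d0]
  have k0' : bl (a * (b * (c * d))) 0 = bl (a * b) 0 := by rw [k0, bl_mul hab, c0]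
  have k0'' : bl (a * (b * (c * d))) 0 = bl a 0 := by rw [k0', bl_mul haM, b0]
  have k1 : bl (a * (b * (c * d))) 1 = bl (a * b * c) 1 := by rw [e, bl_mul habc, d1]
  have k1' : bl (a * (b * (c * d))) 1 = bl (a * b) 1 := by rw [k1, bl_mul hab, e1]
  have k2 : bl (a * (b * (c * d))) 2 = bl (a * b * c) 2 := by rw [e, bl_mul habc, d2]
  refine ⟨?_, ?_, ?_, ?_, ?_, ?_⟩
  · rw [k0'', bl_code]; rfl
  · rw [k0', bl_code]; rfl
  · rw [k1', bl_code]; rfl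
  · rw [k0, bl_code]; rfl
  · rw [k1, bl_code]; rfl
  · rw [k2, bl_code]; rfl

/-! ### 4-transitivity -/

theorem ckTr : ((List.range 11).all (fun k => T1.any fun t => Nat.beq (lk t 0 / 2) k) &&
    (List.range 10).all (fun k => T2.any fun t => Nat.beq (lk t 2 / 2) (k + 1)) &&
    (List.range 9).all (fun k => T3.any fun t => Nat.beq (lk t 4 / 2) (k + 2)) &&
    (List.range 8).all (fun k => T4.any fun t => Nat.beq (lk t 6 / 2) (k + 3))) = true := by
  decide +kernel

theorem tr1 (k : Fin 11) : ∃ t ∈ M, bl t 0 = k := by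
  have := ckTr
  simp only [List.all_eq_true, List.any_eq_true, Bool.and_eq_true, beq_iff, List.mem_range] at this
  obtain ⟨t, ht, h⟩ := this.1.1.1 k k.2
  obtain ⟨t, htM, rfl⟩ := T1M ht
  exact ⟨t, htM, by ext; rw [bl_code]; exact h⟩

theorem tr2 (k : Fin 11) (hk : 1 ≤ (k : ℕ)) : ∃ t ∈ M, bl t 0 = 0 ∧ bl t 1 = k := by
  have := ckTr
  simp only [List.all_eq_true, List.any_eq_true, Bool.and_eq_true, beq_iff, List.mem_range] at this
  obtain ⟨t, ht, h⟩ := this.1.1.2 (k - 1) (by omega)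
  obtain ⟨t, htM, rfl⟩ := T2M ht
  exact ⟨t, htM, T2f ht, by ext; rw [bl_code]; exact h.trans (by omega)⟩

theorem tr3 (k : Fin 11) (hk : 2 ≤ (k : ℕ)) : ∃ t ∈ M, bl t 0 = 0 ∧ bl t 1 = 1 ∧ bl t 2 = k := by
  have := ckTr
  simp only [List.all_eq_true, List.any_eq_true, Bool.and_eq_true, beq_iff, List.mem_range] at this
  obtain ⟨t, ht, h⟩ := this.1.2 (k - 2) (by omega)
  obtain ⟨t, htM, rfl⟩ := T3M ht
  exact ⟨t, htM, (T3f ht).1, (T3f ht).2, by ext; rw [bl_code]; exact h.trans (by omega)⟩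

theorem tr4 (k : Fin 11) (hk : 3 ≤ (k : ℕ)) :
    ∃ t ∈ M, bl t 0 = 0 ∧ bl t 1 = 1 ∧ bl t 2 = 2 ∧ bl t 3 = k := by
  have := ckTr
  simp only [List.all_eq_true, List.any_eq_true, Bool.and_eq_true, beq_iff, List.mem_range] at this
  obtain ⟨t, ht, h⟩ := this.2 (k - 3) (by omega)
  obtain ⟨t, htM, rfl⟩ := T4M ht
  exact ⟨t, htM, (T4f ht).1, (T4f ht).2.1, (T4f ht).2.2,
    by ext; rw [bl_code]; exact h.trans (by omega)⟩

theorem bl_surj {σ : Perm (Fin 22)} (h : σ ∈ M) (a : Fin 11) : ∃ b, bl σ b = a :=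
  ⟨bl σ⁻¹ a, by rw [← bl_mul h, mul_inv_cancel, bl_one]⟩

theorem trans4 (a b c d : Fin 11) (hab : a ≠ b) (hac : a ≠ c) (had : a ≠ d) (hbc : b ≠ c)
    (hbd : b ≠ d) (hcd : c ≠ d) :
    ∃ h ∈ M, bl h 0 = a ∧ bl h 1 = b ∧ bl h 2 = c ∧ bl h 3 = d := by
  obtain ⟨t1, m1, h1⟩ := tr1 a
  obtain ⟨b', hb'⟩ := bl_surj m1 b
  have hb0 : b' ≠ 0 := by rintro rfl; exact hab (h1.symm.trans hb')
  obtain ⟨t2, m2, h2, h2'⟩ := tr2 b' (by omega)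
  have m12 := M.mul_mem m1 m2
  have q0 : bl (t1 * t2) 0 = a := by rw [bl_mul m1, h2, h1]
  have q1 : bl (t1 * t2) 1 = b := by rw [bl_mul m1, h2', hb']
  obtain ⟨c', hc'⟩ := bl_surj m12 c
  have hc0 : c' ≠ 0 := by rintro rfl; exact hac (q0.symm.trans hc')
  have hc1 : c' ≠ 1 := by rintro rfl; exact hbc (q1.symm.trans hc')
  obtain ⟨t3, m3, h3, h3', h3''⟩ := tr3 c' (by omega)
  have m123 := M.mul_mem m12 m3
  have r0 : bl (t1 * t2 * t3) 0 = a := by rw [bl_mul m12, h3, q0]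
  have r1 : bl (t1 * t2 * t3) 1 = b := by rw [bl_mul m12, h3', q1]
  have r2 : bl (t1 * t2 * t3) 2 = c := by rw [bl_mul m12, h3'', hc']
  obtain ⟨d', hd'⟩ := bl_surj m123 d
  have hd0 : d' ≠ 0 := by rintro rfl; exact had (r0.symm.trans hd')
  have hd1 : d' ≠ 1 := by rintro rfl; exact hbd (r1.symm.trans hd')
  have hd2 : d' ≠ 2 := by rintro rfl; exact hcd (r2.symm.trans hd')
  obtain ⟨t4, m4, h4, h4', h4'', h4'''⟩ := tr4 d' (by omega)
  refine ⟨t1 * t2 * t3 * t4, M.mul_mem m123 m4, ?_, ?_, ?_, ?_⟩ <;> rw [bl_mul m123]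
  · rw [h4, r0]
  · rw [h4', r1]
  · rw [h4'', r2]
  · rw [h4''', hd']

/-! ### classification -/

def patOK (b0 b1 b2 b3 : ℕ) : Bool :=
  Nat.beq b0 1 && ((Nat.beq b1 2 && (Nat.beq b2 3 || Nat.beq b2 0)) ||
    (Nat.beq b1 0 && ((Nat.beq b2 3 && Nat.beq b3 2) || (Nat.beq b2 2 && Nat.beq b3 3))))

def allP (a b : ℕ) (g : ℕ → Bool) : Bool := T1.all fun x => !(Nat.beq (lk x 0 / 2) a) ||
  T2.all fun y => !(Nat.beq (lk (mulc x y) 2 / 2) b) ||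
  T3.all fun z => T4.all fun w => g (mulc (mulc (mulc x y) z) w)

theorem allP_spec {a b : ℕ} {g : ℕ → Bool} (h : allP a b g = true) {σ : Perm (Fin 22)} (hσ : σ ∈ M)
    (ha : (bl σ 0 : ℕ) = a) (hb : (bl σ 1 : ℕ) = b) : g (code σ) = true := by
  obtain ⟨x, hx, y, hy, z, hz, w, hw, e, k0, -, k1, -⟩ := enum hσ
  have h1 := List.all_eq_true.1 h x hx
  rw [← k0, ha, Nat.beq_refl] at h1
  simp only [Bool.not_true, Bool.false_or] at h1
  have h2 := List.all_eq_true.1 h1 y hy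
  rw [← k1, hb, Nat.beq_refl] at h2
  rw [e]
  simp only [Bool.not_true, Bool.false_or] at h2
  exact List.all_eq_true.1 (List.all_eq_true.1 h2 z hz) w hw

def conjOK (x : ℕ) : Bool := !(patOK (lk x 0 / 2) (lk x 2 / 2) (lk x 4 / 2) (lk x 6 / 2)) ||
  KT.any fun p => Nat.beq (mulc x p.1) (mulc p.1 p.2)

theorem ckP2 : allP 1 2 conjOK = true := by decide +kernel
theorem ckP0 : allP 1 0 conjOK = true := by decide +kernel
theorem ckI : allP 0 1 (fun x => !(Nat.beq (lk x 4 / 2) 2) || !(Nat.beq (lk x 6 / 2) 3) ||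
   Nat.beq x c1) = true := by decide +kernel

theorem KT_RL : KT.all (fun p => RL.any fun r => Nat.beq r p.2) = true := by decide +kernel

theorem triv {σ : Perm (Fin 22)} (h : σ ∈ M) (h0 : bl σ 0 = 0) (h1 : bl σ 1 = 1) (h2 : bl σ 2 = 2)
    (h3 : bl σ 3 = 3) : σ = 1 := by
  have := allP_spec ckI h (by rw [h0]; rfl) (by rw [h1]; rfl)
  have e2 := bl_code σ 2
  have e3 := bl_code σ 3
  rw [h2] at e2
  rw [h3] at e3
  change (2 : ℕ) = lk (code σ) 4 / 2 at e2
  change (3 : ℕ) = lk (code σ) 6 / 2 at e3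
  rw [← e2, ← e3] at this
  simp only [Nat.beq_refl, Bool.not_true, Bool.false_or, beq_iff] at this
  exact code_inj (this.trans code_one.symm)

theorem pat_conj {σ : Perm (Fin 22)} (h : σ ∈ M)
    (hp : patOK (bl σ 0) (bl σ 1) (bl σ 2) (bl σ 3) = true) :
    ∃ k ∈ M, ∃ r ∈ M, code r ∈ RL ∧ σ * k = k * r := by
  have key : conjOK (code σ) = true := by
    have hp' := hp
    simp only [patOK, Bool.and_eq_true, Bool.or_eq_true, beq_iff] at hp'
    rcases hp'.2 with hh | hh
    · exact allP_spec ckP2 h hp'.1 hh.1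
    · exact allP_spec ckP0 h hp'.1 hh.1
  rw [bl_code, bl_code, bl_code, bl_code] at hp
  unfold conjOK at key
  change patOK (lk (code σ) 0 / 2) (lk (code σ) 2 / 2) (lk (code σ) 4 / 2) (lk (code σ) 6 / 2) = true
    at hp
  rw [hp] at key
  simp only [Bool.not_true, Bool.false_or, List.any_eq_true, beq_iff] at key
  obtain ⟨⟨k, r⟩, hkr, e⟩ := key
  have hr : r ∈ RL := by
    have := List.all_eq_true.1 KT_RL _ hkr
    simp only [List.any_eq_true, beq_iff] at this
    obtain ⟨r', hr', rfl⟩ := this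
    exact hr'
  obtain ⟨k', hk', rfl⟩ := mem_InM (c := k) (by
    have : k ∈ KT.map Prod.fst := List.mem_map_of_mem (f := Prod.fst) hkr
    simp only [allL, List.mem_append, this, or_true, true_or])
  obtain ⟨r', hr', rfl⟩ := mem_InM (c := r) (by simp [allL, hr])
  refine ⟨k', hk', r', hr', hr, code_inj ?_⟩
  rw [code_mul, code_mul]; exact e

theorem classify {σ : Perm (Fin 22)} (h : σ ∈ M) (h1 : σ ≠ 1) :
    ∃ k ∈ M, ∃ r ∈ M, code r ∈ RL ∧ σ * k = k * r := by
  have main : ∃ a b c d : Fin 11, a ≠ b ∧ a ≠ c ∧ a ≠ d ∧ b ≠ c ∧ b ≠ d ∧ c ≠ d ∧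
      bl σ a = b ∧ ((bl σ b = c ∧ (bl σ c = d ∨ bl σ c = a)) ∨
      (bl σ b = a ∧ ((bl σ c = d ∧ bl σ d = c) ∨ (bl σ c = c ∧ bl σ d = d)))) := by
    have inj := bl_inj h
    have nid : ∃ a, bl σ a ≠ a := by
      by_contra hh
      push Not at hh
      exact h1 (triv h (hh _) (hh _) (hh _) (hh _))
    generalize bl σ = f at inj nid
    by_cases c1 : ∃ a, f a ≠ a ∧ f (f a) ≠ a ∧ f (f (f a)) ≠ a
    · obtain ⟨a, p, q, r⟩ := c1
      refine ⟨a, f a, f (f a), f (f (f a)), p.symm, q.symm, r.symm, fun e => p (inj e).symm,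
        fun e => q (inj e).symm, fun e => p (inj (inj e)).symm, rfl, Or.inl ⟨rfl, Or.inl rfl⟩⟩
    by_cases c2 : ∃ a, f a ≠ a ∧ f (f a) ≠ a
    · obtain ⟨a, p, q⟩ := c2
      have r : f (f (f a)) = a := by
        by_contra r; exact c1 ⟨a, p, q, r⟩
      obtain ⟨d, hd⟩ : ∃ d, d ∉ ({a, f a, f (f a)} : Finset (Fin 11)) := by
        by_contra hh
        push Not at hh
        have : (Finset.univ : Finset (Fin 11)).card ≤ _ :=
          Finset.card_le_card (fun x _ => hh x)
        have := this.trans Finset.card_le_three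
        simp at this
      simp only [Finset.mem_insert, Finset.mem_singleton, not_or] at hd
      exact ⟨a, f a, f (f a), d, p.symm, q.symm, Ne.symm hd.1, fun e => p (inj e).symm,
        Ne.symm hd.2.1, Ne.symm hd.2.2, rfl, Or.inl ⟨rfl, Or.inr r⟩⟩
    have inv : ∀ a, f (f a) = a := by
      intro a
      by_contra hh
      exact c2 ⟨a, fun e => hh (by rw [e, e]), hh⟩
    obtain ⟨a, p⟩ := nid
    by_cases c3 : ∃ c, c ≠ a ∧ c ≠ f a ∧ f c ≠ c
    · obtain ⟨c, q, r, t⟩ := c3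
      refine ⟨a, f a, c, f c, p.symm, q.symm, fun e => r (by rw [e, inv]), r.symm,
        fun e => q (inj e).symm, t.symm, rfl, Or.inr ⟨inv a, Or.inl ⟨rfl, inv c⟩⟩⟩
    · push Not at c3
      obtain ⟨c, hc⟩ : ∃ d, d ∉ ({a, f a} : Finset (Fin 11)) := by
        by_contra hh
        push Not at hh
        have : (Finset.univ : Finset (Fin 11)).card ≤ _ :=
          Finset.card_le_card (fun x _ => hh x)
        have := this.trans Finset.card_le_two
        simp at this
      obtain ⟨d, hd⟩ : ∃ d, d ∉ ({a, f a, c} : Finset (Fin 11)) := by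
        by_contra hh
        push Not at hh
        have : (Finset.univ : Finset (Fin 11)).card ≤ _ :=
          Finset.card_le_card (fun x _ => hh x)
        have := this.trans Finset.card_le_three
        simp at this
      simp only [Finset.mem_insert, Finset.mem_singleton, not_or] at hc hd
      exact ⟨a, f a, c, d, p.symm, Ne.symm hc.1, Ne.symm hd.1, Ne.symm hc.2, Ne.symm hd.2.1,
        Ne.symm hd.2.2, rfl, Or.inr ⟨inv a, Or.inr ⟨c3 c hc.1 hc.2, c3 d hd.1 hd.2.1⟩⟩⟩
  obtain ⟨a, b, c, d, hab, hac, had, hbc, hbd, hcd, e1, e2⟩ := main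
  obtain ⟨g, hg, g0, g1, g2, g3⟩ := trans4 a b c d hab hac had hbc hbd hcd
  have hi := M.inv_mem hg
  have i0 := bl_inv hg g0
  have i1 := bl_inv hg g1
  have i2 := bl_inv hg g2
  have i3 := bl_inv hg g3
  have hm : g⁻¹ * σ * g ∈ M := M.mul_mem (M.mul_mem hi h) hg
  have cal : ∀ k, bl (g⁻¹ * σ * g) k = bl g⁻¹ (bl σ (bl g k)) := by
    intro k; rw [bl_mul (M.mul_mem hi h), bl_mul hi]
  obtain ⟨k, hk, r, hr, hr', e⟩ := pat_conj hm (by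
    rw [cal, cal, cal, cal, g0, g1, g2, g3, e1, i1]
    rcases e2 with ⟨e2, e3 | e3⟩ | ⟨e2, ⟨e3, e4⟩ | ⟨e3, e4⟩⟩
    · rw [e2, i2, e3, i3]; rfl
    · rw [e2, i2, e3, i0]; rfl
    · rw [e2, i0, e3, i3, e4, i2]; rfl
    · rw [e2, i0, e3, i2, e4, i3]; rfl)
  refine ⟨g * k, M.mul_mem hg hk, r, hr, hr', ?_⟩
  rw [mul_assoc g k r, ← e]; group

end MH

namespace MH

open Equiv

/-! ### signed permutations -/

abbrev Vec := Fin 22 → ZMod 2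

theorem z2 (a : ZMod 2) : a + a = 0 := CharTwo.add_self_eq_zero a

def el (v : Vec) (σ : Perm (Fin 22)) : Perm (Fin 22 × ZMod 2) where
  toFun p := (σ p.1, p.2 + v p.1)
  invFun p := (σ⁻¹ p.1, p.2 + v (σ⁻¹ p.1))
  left_inv p := by ext <;> simp [add_assoc, z2]
  right_inv p := by ext <;> simp [add_assoc, z2]

theorem el_apply (v : Vec) (σ : Perm (Fin 22)) (p) : el v σ p = (σ p.1, p.2 + v p.1) := rfl

theorem el_mul (v w : Vec) (σ τ : Perm (Fin 22)) :
    el v σ * el w τ = el (fun i => w i + v (τ i)) (σ * τ) := by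
  ext p <;> simp [el_apply, add_assoc]

theorem el_one : el 0 1 = 1 := by
  ext p <;> simp [el_apply]

theorem el_inv (v : Vec) (σ : Perm (Fin 22)) : (el v σ)⁻¹ = el (fun i => v (σ⁻¹ i)) σ⁻¹ := by
  rw [inv_eq_iff_mul_eq_one, el_mul, ← el_one]
  congr 1
  · funext i; simp [z2]
  · simp

theorem el_inj {v w : Vec} {σ τ : Perm (Fin 22)} (h : el v σ = el w τ) : v = w ∧ σ = τ := by
  constructor
  · funext i
    have := congrArg Prod.snd (Equiv.congr_fun h (i, 0))
    simpa [el_apply] using this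
  · ext i
    have := congrArg Prod.fst (Equiv.congr_fun h (i, 0))
    simp only [el_apply] at this
    rw [this]

def e44 : Fin 44 ≃ Fin 22 × ZMod 2 where
  toFun x := (⟨(x + 43) % 44 / 2, by omega⟩, (⟨(x + 43) % 44 % 2, by omega⟩ : Fin 2))
  invFun p := ⟨(2 * (p.1 : ℕ) + (show Fin 2 from p.2 : ℕ) + 1) % 44, Nat.mod_lt _ (by norm_num)⟩
  left_inv := by unfold Function.LeftInverse; decide +kernel
  right_inv := by unfold Function.RightInverse Function.LeftInverse; decide +kernel

def φ : Perm (Fin 44) ≃* Perm (Fin 22 × ZMod 2) := e44.permCongrHom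

theorem φ_apply (g : Perm (Fin 44)) (p) : φ g p = e44 (g (e44.symm p)) := rfl

def dl (i : Fin 22) : Vec := fun j => if j = i then 1 else 0

theorem φ1 : φ g1 = el (dl 0 + dl 21) 1 := by
  apply Equiv.ext; intro p; rw [φ_apply, el_apply]; revert p; decide +kernel
theorem φ2 : φ g2 = el (dl 0 + dl 10) 1 := by
  apply Equiv.ext; intro p; rw [φ_apply, el_apply]; revert p; decide +kernel
theorem φ3 : φ g3 = el 0 σ3 := by
  apply Equiv.ext; intro p; rw [φ_apply, el_apply]; revert p; decide +kernel
theorem φ4 : φ g4 = el (dl 1 + dl 2) σ4 := by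
  apply Equiv.ext; intro p; rw [φ_apply, el_apply]; revert p; decide +kernel

theorem reach {C : Fin 22 → Prop} (h0 : C 0) (a : ∀ i, C i → C (σ3 i)) (b : ∀ i, C i → C (σ4 i)) :
    ∀ i, C i := by
  have h19 : C 19 := a 0 h0
  have h6 : C 6 := a 19 h19
  have h21 : C 21 := a 6 h6
  have h12 : C 12 := a 21 h21
  have h11 : C 11 := b 0 h0
  have h13 : C 13 := b 11 h11
  have h5 : C 5 := b 13 h13
  have h20 : C 20 := b 5 h5
  have h4 : C 4 := b 12 h12
  have h1 : C 1 := b 20 h20 |> fun _ => b 21 (b 4 h4)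
  have h10 : C 10 := b 1 h1
  have h8 : C 8 := b 6 h6
  have h18 : C 18 := b 8 h8
  have h14 : C 14 := b 18 h18
  have h3 : C 3 := b 14 h14
  have h15 : C 15 := b 19 h19
  have h2 : C 2 := b 15 h15
  have h7 : C 7 := b 2 h2
  have h9 : C 9 := b 7 h7
  have h16 : C 16 := a 3 h3
  have h17 : C 17 := a 2 h2
  intro i
  fin_cases i <;> assumption

def ev0 (v : Vec) : Prop := ∑ i, v i = 0

theorem ev0_comp {v : Vec} (h : ev0 v) (σ : Perm (Fin 22)) : ev0 (fun i => v (σ i)) := by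
  unfold ev0 at *; rw [Equiv.sum_comp σ v]; exact h

theorem ev0_add {v w : Vec} (h : ev0 v) (h' : ev0 w) : ev0 (fun i => v i + w i) := by
  unfold ev0 at *; rw [Finset.sum_add_distrib, h, h', add_zero]

theorem ev0_zero : ev0 0 := by simp [ev0]

def GG : Subgroup (Perm (Fin 22 × ZMod 2)) := GMacHale.map φ.toMonoidHom

theorem mem_GG {x : Perm (Fin 44)} : φ x ∈ GG ↔ x ∈ GMacHale := by
  constructor
  · rintro ⟨y, hy, h⟩
    have : y = x := φ.injective h
    rw [← this]; exact hy
  · intro h; exact ⟨x, h, rfl⟩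

theorem dl_sum (i : Fin 22) : ∑ j, dl i j = 1 := by simp [dl]

theorem sub1 {x : Perm (Fin 44)} (h : x ∈ GMacHale) : ∃ v σ, ev0 v ∧ σ ∈ M ∧ φ x = el v σ := by
  have dd : ∀ i j, ev0 (dl i + dl j) := by
    intro i j; unfold ev0; simp only [Pi.add_apply, Finset.sum_add_distrib, dl_sum]; rfl
  induction h using Subgroup.closure_induction with
  | mem x hx =>
    rcases hx with rfl | rfl | rfl | rfl
    · exact ⟨_, _, dd _ _, M.one_mem, φ1⟩
    · exact ⟨_, _, dd _ _, M.one_mem, φ2⟩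
    · exact ⟨_, _, ev0_zero, σ3_mem, φ3⟩
    · exact ⟨_, _, dd _ _, σ4_mem, φ4⟩
  | one => exact ⟨0, 1, ev0_zero, M.one_mem, by rw [map_one, el_one]⟩
  | mul x y _ _ hx hy =>
    obtain ⟨v, σ, hv, hσ, e⟩ := hx
    obtain ⟨w, τ, hw, hτ, e'⟩ := hy
    exact ⟨_, _, ev0_add hw (ev0_comp hv τ), M.mul_mem hσ hτ, by rw [map_mul, e, e', el_mul]⟩
  | inv x _ hx =>
    obtain ⟨v, σ, hv, hσ, e⟩ := hx
    exact ⟨_, _, ev0_comp hv σ⁻¹, M.inv_mem hσ, by rw [map_inv, e, el_inv]⟩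

def R (i j : Fin 22) : Prop := el (dl i + dl j) 1 ∈ GG

theorem R.symm {i j} (h : R i j) : R j i := by unfold R; rw [add_comm]; exact h

theorem R.trans {i j k} (h : R i j) (h' : R j k) : R i k := by
  have := GG.mul_mem h h'
  rw [el_mul] at this
  unfold R
  convert this using 2
  · funext l
    have := z2 (dl j l)
    simp only [Pi.add_apply, Perm.one_apply]
    linear_combination -this
  · simp

theorem R.act {w : Vec} {τ : Perm (Fin 22)} (hw : el w τ ∈ GG) {i j} (h : R i j) :
    R (τ i) (τ j) := by
  have := GG.mul_mem (GG.mul_mem hw h) (GG.inv_mem hw)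
  rw [el_inv, el_mul, el_mul] at this
  unfold R
  convert this using 2
  · funext l
    simp only [Pi.add_apply, Perm.one_apply]
    have e : ∀ i, dl (τ i) l = dl i (τ⁻¹ l) := by
      intro i; simp only [dl, Perm.inv_eq_iff_eq]
    rw [e, e]
    have := z2 (w (τ⁻¹ l))
    linear_combination -this
  · simp

theorem e3 : el 0 σ3 ∈ GG := φ3 ▸ mem_GG.2 (Subgroup.subset_closure (by simp))
theorem e4 : el (dl 1 + dl 2) σ4 ∈ GG := φ4 ▸ mem_GG.2 (Subgroup.subset_closure (by simp))
theorem R21 : R 0 21 := by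
  unfold R; rw [← φ1]; exact mem_GG.2 (Subgroup.subset_closure (by simp))
theorem R10 : R 0 10 := by
  unfold R; rw [← φ2]; exact mem_GG.2 (Subgroup.subset_closure (by simp))

theorem R_all (i : Fin 22) : R 0 i := by
  have h19 : R 0 19 := R21.trans (((R21.act e3).act e3).act e3)
  have h12 : R 19 12 := R21.act e3
  have h11 : R 11 12 := R10.act e4
  have k11 : R 0 11 := (h19.trans h12).trans h11.symm
  refine reach (C := R 0) (R21.trans R21.symm) ?_ ?_ i
  · intro i h; exact h19.trans (h.act e3)
  · intro i h; exact k11.trans (h.act e4)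

theorem even_mem {v : Vec} (h : ev0 v) : el v 1 ∈ GG := by
  have key : ∀ s : Finset (Fin 22), el (∑ i ∈ s, v i • (dl 0 + dl i)) 1 ∈ GG := by
    intro s
    induction s using Finset.induction_on with
    | empty => simp only [Finset.sum_empty, el_one]; exact GG.one_mem
    | insert a s ha ih =>
      rw [Finset.sum_insert ha]
      have h1 : el (v a • (dl 0 + dl a)) 1 ∈ GG := by
        have : v a = 0 ∨ v a = 1 := by generalize v a = x; revert x; decide
        rcases this with h | h <;> rw [h]
        · rw [zero_smul, el_one]; exact GG.one_mem
        · rw [one_smul]; exact R_all a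
      have := GG.mul_mem ih h1
      rw [el_mul] at this
      exact this
  have := key Finset.univ
  convert this using 2
  funext l
  simp only [Finset.sum_apply, Pi.smul_apply, Pi.add_apply, smul_eq_mul, mul_add,
    Finset.sum_add_distrib, ← Finset.sum_mul]
  unfold ev0 at h
  rw [h]
  simp [dl]

theorem sup1 {v : Vec} {σ : Perm (Fin 22)} (hv : ev0 v) (h : σ ∈ M) : el v σ ∈ GG := by
  have : ∃ w, el w σ ∈ GG := by
    clear hv
    induction h using Subgroup.closure_induction with
    | mem x hx =>
      rcases hx with rfl | rfl
      · exact ⟨_, e3⟩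
      · exact ⟨_, e4⟩
    | one => exact ⟨0, by rw [el_one]; exact GG.one_mem⟩
    | mul x y _ _ hx hy =>
      obtain ⟨v, hv⟩ := hx
      obtain ⟨w, hw⟩ := hy
      exact ⟨_, el_mul v w x y ▸ GG.mul_mem hv hw⟩
    | inv x _ hx =>
      obtain ⟨v, hv⟩ := hx
      exact ⟨_, el_inv v x ▸ GG.inv_mem hv⟩
  obtain ⟨w, hw⟩ := this
  have hw0 : ev0 w := by
    obtain ⟨y, hy, h⟩ := hw
    obtain ⟨v', σ', h1, h2, h3⟩ := sub1 hy
    have h : φ y = el w σ := h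
    rw [h] at h3
    rw [(el_inj h3).1]; exact h1
  have := GG.mul_mem hw (even_mem (ev0_add hv hw0))
  rw [el_mul] at this
  convert this using 2
  · funext i; simp [add_assoc, z2]
  · simp

def tr (v : Vec) (σ : Perm (Fin 22)) : Perm (Fin 44) := φ.symm (el v σ)

theorem φ_tr (v : Vec) (σ : Perm (Fin 22)) : φ (tr v σ) = el v σ := φ.apply_symm_apply _

theorem tr_mem {v : Vec} {σ : Perm (Fin 22)} (hv : ev0 v) (h : σ ∈ M) : tr v σ ∈ GMacHale := by
  rw [← mem_GG, φ_tr]; exact sup1 hv h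

def IsC (u : Vec) (ρ : Perm (Fin 22)) : Prop := ∃ α ∈ M, ∃ β ∈ M, ∃ v w : Vec, ev0 v ∧ ev0 w ∧
  β * α * ρ = α * β ∧ ∀ i, u i = v (ρ i) + w (α (ρ i)) + w i + v (β i)

theorem comm_iff (u : Vec) (ρ : Perm (Fin 22)) (x : GMacHale) (hx : φ x = el u ρ) :
    (∃ a b : GMacHale, x = a⁻¹ * b⁻¹ * a * b) ↔ IsC u ρ := by
  constructor
  · rintro ⟨a, b, h⟩
    obtain ⟨v, α, hv, hα, ea⟩ := sub1 a.2
    obtain ⟨w, β, hw, hβ, eb⟩ := sub1 b.2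
    refine ⟨α, hα, β, hβ, v, w, hv, hw, ?_⟩
    have h1 : b * a * x = a * b := by rw [h]; group
    have h2 := congrArg (fun y : GMacHale => φ (y : Perm (Fin 44))) h1
    simp only [Subgroup.coe_mul, map_mul, ea, eb, hx, el_mul] at h2
    obtain ⟨h3, h4⟩ := el_inj h2
    refine ⟨h4, fun i => ?_⟩
    have h5 := congrFun h3 i
    have := z2 (v (ρ i))
    have := z2 (w (α (ρ i)))
    linear_combination h5 - z2 (v (ρ i)) - z2 (w (α (ρ i)))
  · rintro ⟨α, hα, β, hβ, v, w, hv, hw, h4, h5⟩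
    refine ⟨⟨tr v α, tr_mem hv hα⟩, ⟨tr w β, tr_mem hw hβ⟩, ?_⟩
    set a : GMacHale := ⟨tr v α, tr_mem hv hα⟩ with ha
    set b : GMacHale := ⟨tr w β, tr_mem hw hβ⟩ with hb
    have ea : φ a = el v α := φ_tr _ _
    have eb : φ b = el w β := φ_tr _ _
    have h1 : b * a * x = a * b := by
      apply Subtype.ext
      apply φ.injective
      simp only [Subgroup.coe_mul, map_mul, ea, eb, hx, el_mul]
      rw [h4]
      congr 1
      funext i
      rw [h5 i]
      linear_combination z2 (v (ρ i)) + z2 (w (α (ρ i)))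
    rw [mul_assoc (a⁻¹ * b⁻¹), ← h1]; group

end MH

namespace MH

open Equiv

/-! ### linear algebra certificates -/

def ev (m i : ℕ) : ZMod 2 := if Nat.testBit m i then 1 else 0
def dot (m : ℕ) (u : Vec) : ZMod 2 := ∑ i : Fin 22, ev m i * u i
def kd (i j : ℕ) : ZMod 2 := if Nat.beq i j then 1 else 0
def nt (l : List ℕ) (j : ℕ) : ℕ := l.getD j 0

theorem zcase (a : ZMod 2) : a = 0 ∨ a = 1 := by revert a; decide

theorem kd_sum (f : Vec) (i : Fin 22) : ∑ j : Fin 22, f j * kd i j = f i := by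
  simp only [kd, beq_iff, Fin.val_inj, mul_ite, mul_one, mul_zero]
  simp

theorem IsC.conj {u : Vec} {ρ ρ' h : Perm (Fin 22)} (hh : h ∈ M) (e : ρ * h = h * ρ')
    (H : IsC (fun i => u (h i)) ρ') : IsC u ρ := by
  obtain ⟨α, hα, β, hβ, v, w, hv, hw, e1, e2⟩ := H
  have hi := M.inv_mem hh
  have e' : ρ = h * ρ' * h⁻¹ := by rw [← e]; group
  refine ⟨h * α * h⁻¹, M.mul_mem (M.mul_mem hh hα) hi, h * β * h⁻¹, M.mul_mem (M.mul_mem hh hβ) hi,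
    _, _, ev0_comp hv h⁻¹, ev0_comp hw h⁻¹, ?_, ?_⟩
  · calc _ = h * (β * α * ρ') * h⁻¹ := by rw [e']; group
      _ = _ := by rw [e1]; group
  · intro i
    have := e2 (h⁻¹ i)
    rw [e']
    simpa using this

theorem span {α β ρ : Perm (Fin 22)} (hα : α ∈ M) (hβ : β ∈ M) (hm : β * α * ρ = α * β)
    {B V W : ℕ → ℕ} {u : Vec} (hu : ∀ i : Fin 22, u i = ∑ j : Fin 22, u j * ev (B j) i)
    (hV : ∀ j : Fin 22, ∑ i : Fin 22, ev (V j) i = 0)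
    (hW : ∀ j : Fin 22, ∑ i : Fin 22, ev (W j) i = 0)
    (hr : ∀ j i : Fin 22, ev (B j) i =
      ev (V j) (ρ i) + ev (W j) (α (ρ i)) + ev (W j) i + ev (V j) (β i)) : IsC u ρ := by
  have z : ∀ X : ℕ → ℕ, (∀ j : Fin 22, ∑ i : Fin 22, ev (X j) i = 0) →
      ev0 (fun i => ∑ j : Fin 22, u j * ev (X j) i) := by
    intro X hX
    unfold ev0
    rw [Finset.sum_comm]
    simp only [← Finset.mul_sum, hX, mul_zero, Finset.sum_const_zero]
  refine ⟨α, hα, β, hβ, _, _, z V hV, z W hW, hm, fun i => ?_⟩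
  rw [hu i]
  simp only [hr, mul_add, Finset.sum_add_distrib]

theorem shape {B : ℕ → ℕ} {m r1 r0 : ℕ} {u : Vec} (h0 : ev0 u) (h1 : dot m u = 0)
    (hB : ∀ j i : Fin 22, ev (B j) i = kd i j + kd i r1 * ev m j + kd i r0 * (1 + ev m j)) :
    ∀ i : Fin 22, u i = ∑ j : Fin 22, u j * ev (B j) i := by
  intro i
  have e : ∀ j : Fin 22, u j * ev (B j) i =
      u j * kd i j + (kd i r1 + kd i r0) * (ev m j * u j) + kd i r0 * u j := by
    intro j; rw [hB]; ring
  simp only [e, Finset.sum_add_distrib, ← Finset.mul_sum, kd_sum]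
  unfold dot at h1
  unfold ev0 at h0
  rw [h1, h0]; ring

theorem shO : ∀ j i : Fin 22, ev (nt BO j) i =
    kd i j + kd i 0 * ev mO j + kd i 1 * (1 + ev mO j) := by decide +kernel
theorem shP : ∀ j i : Fin 22, ev (nt BP j) i =
    kd i j + kd i 8 * ev 768 j + kd i 0 * (1 + ev 768 j) := by decide +kernel
theorem evWO : ∀ j : Fin 22, ∑ i : Fin 22, ev (nt WO j) i = 0 := by decide +kernel
theorem evWP : ∀ j : Fin 22, ∑ i : Fin 22, ev (nt WP j) i = 0 := by decide +kernel
theorem evVP : ∀ j : Fin 22, ∑ i : Fin 22, ev (nt VP j) i = 0 := by decide +kernel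
theorem evWD : ∀ j : Fin 22, ∑ i : Fin 22, ev (nt WD j) i = 0 := by decide +kernel
theorem relO : ∀ j i : Fin 22, ev (nt BO j) i = ev (nt WO j) (lk cs i) + ev (nt WO j) i := by
  decide +kernel
theorem relD : ∀ j i : Fin 22, ev (nt BD j) i = ev (nt WD j) (lk cde i) + ev (nt WD j) i := by
  decide +kernel
theorem relP : ∀ j i : Fin 22, ev (nt BP j) i = ev (nt VP j) (lk ctr i) +
    ev (nt WP j) (lk cal (lk ctr i)) + ev (nt WP j) i + ev (nt VP j) (lk cbe i) := by
  decide +kernel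
theorem csi_eq : mulc cs csi = c1 := by decide +kernel

theorem sM : ∃ s ∈ M, code s = cs := mem_InM (by simp [allL])
theorem trM : ∃ s ∈ M, code s = ctr := mem_InM (by simp [allL])
theorem alM : ∃ s ∈ M, code s = cal := mem_InM (by simp [allL])
theorem beM : ∃ s ∈ M, code s = cbe := mem_InM (by simp [allL])
theorem deM : ∃ s ∈ M, code s = cde := mem_InM (by simp [allL])

theorem sol11 {s : Perm (Fin 22)} (hc : code s = cs) {u : Vec} (h0 : ev0 u) (h1 : dot mO u = 0) :
    ∃ w, ev0 w ∧ ∀ i, u i = w (s i) + w i := by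
  refine ⟨fun i => ∑ j : Fin 22, u j * ev (nt WO j) i, ?_, ?_⟩
  · unfold ev0
    rw [Finset.sum_comm]
    simp only [← Finset.mul_sum, evWO, mul_zero, Finset.sum_const_zero]
  · intro i
    conv_lhs => rw [shape h0 h1 shO i]
    simp only [relO, mul_add, Finset.sum_add_distrib, ← hc, lk_code]

theorem csi_lt : ∀ i : Fin 22, lk csi i < 22 := by decide +kernel
theorem cs_lt : ∀ i : Fin 22, lk cs i < 22 := by decide +kernel
def sI : Perm (Fin 22) where
  toFun i := ⟨lk csi i, csi_lt i⟩
  invFun i := ⟨lk cs i, cs_lt i⟩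
  left_inv := by unfold Function.LeftInverse; decide +kernel
  right_inv := by unfold Function.RightInverse Function.LeftInverse; decide +kernel
theorem sI_code : code sI = csi := by decide +kernel

theorem csi_code {s : Perm (Fin 22)} (hc : code s = cs) : code s⁻¹ = csi := by
  have : s * sI = 1 := code_inj (by rw [code_mul, hc, sI_code, code_one, csi_eq])
  rw [inv_eq_of_mul_eq_one_right this, sI_code]

/-- the commutator with an element of order eleven, twisted by a vector -/
theorem com11 {s β ρ : Perm (Fin 22)} (hc : code s = cs) (hs : s ∈ M) (hβ : β ∈ M)
    (e : ρ * (s⁻¹ * β) = β * s⁻¹) {u v : Vec} (h0 : ev0 u) (hv : ev0 v)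
    (h1 : dot mO (fun i => u i + (v (ρ i) + v (β i))) = 0) : IsC u ρ := by
  have e' : ρ = β * s⁻¹ * β⁻¹ * s := by
    calc ρ = ρ * (s⁻¹ * β) * (β⁻¹ * s) := by group
      _ = _ := by rw [e]; group
  obtain ⟨w, hw, hw'⟩ := sol11 hc (ev0_add h0 (ev0_add (ev0_comp hv ρ) (ev0_comp hv β))) h1
  refine ⟨β * s * β⁻¹, M.mul_mem (M.mul_mem hβ hs) (M.inv_mem hβ), β, hβ, v, w, hv, hw, ?_, ?_⟩
  · rw [e']; group
  · intro i
    have h2 : (β * s * β⁻¹) (ρ i) = s i := by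
      rw [← Perm.mul_apply, e']; congr 1; group
    rw [h2]
    linear_combination hw' i - z2 (v (ρ i)) - z2 (v (β i))

theorem com11' {s k β r : Perm (Fin 22)} (hc : code s = cs)
    (e : mulc (code r) (mulc (code k) (mulc csi (code β))) = mulc (code k) (mulc (code β) csi)) :
    (k⁻¹ * r * k) * (s⁻¹ * β) = β * s⁻¹ := by
  rw [← csi_code hc, ← code_mul, ← code_mul, ← code_mul, ← code_mul, ← code_mul] at e
  have := code_inj e
  calc _ = k⁻¹ * (r * (k * (s⁻¹ * β))) := by group
    _ = _ := by rw [this]; group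

theorem dot_zero_add (m : ℕ) (u v : Vec) : dot m (fun i => u i + v i) = dot m u + dot m v := by
  simp only [dot, mul_add, Finset.sum_add_distrib]

def ftB (x : ℕ × ℕ × ℕ × ℕ) : Bool :=
  Nat.beq (mulc x.1 (mulc x.2.1 (mulc csi x.2.2.1))) (mulc x.2.1 (mulc x.2.2.1 csi)) &&
  decide (∑ j : Fin 22, ev x.2.2.2 j = 0) &&
  decide (∑ j : Fin 22, (ev mO (lk csi (lk x.2.2.1 j)) * ev x.2.2.2 (lk x.2.2.1 (lk csi j)) +
    ev mO j * ev x.2.2.2 (lk x.2.2.1 j)) = 1)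

theorem ckF : FT.all ftB = true := by decide +kernel
theorem RL_FT : RL.all (fun r => Nat.beq r ctr || FT.any fun x => Nat.beq x.1 r) = true := by
  decide +kernel

theorem nonInv {r : Perm (Fin 22)} {x : ℕ × ℕ × ℕ × ℕ} (hx : x ∈ FT) (hr : code r = x.1) {u : Vec}
    (h0 : ev0 u) : IsC u r := by
  obtain ⟨s, hs, hc⟩ := sM
  obtain ⟨k, hk, ek⟩ := mem_InM (c := x.2.1) (by
    have : x.2.1 ∈ FT.map (fun x => x.2.1) := List.mem_map_of_mem (f := fun x => x.2.1) hx
    simp only [allL, List.mem_append, this, or_true, true_or])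
  obtain ⟨β, hβ, eβ⟩ := mem_InM (c := x.2.2.1) (by
    have : x.2.2.1 ∈ FT.map (fun x => x.2.2.1) := List.mem_map_of_mem (f := fun x => x.2.2.1) hx
    simp only [allL, List.mem_append, this, or_true, true_or])
  have ck := List.all_eq_true.1 ckF x hx
  simp only [ftB, Bool.and_eq_true, beq_iff, decide_eq_true_eq] at ck
  obtain ⟨⟨h1, h2⟩, h3⟩ := ck
  rw [← hr, ← ek, ← eβ] at h1
  have e := com11' hc h1
  have hh0 := ev0_comp h0 k
  apply IsC.conj hk (ρ' := k⁻¹ * r * k) (by group)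
  set ρ := k⁻¹ * r * k with hρ
  rcases zcase (dot mO (fun i => u (k i))) with h | h
  · exact com11 hc hs hβ e (v := 0) hh0 ev0_zero (by simpa using h)
  · apply com11 hc hs hβ e (v := fun i => ev x.2.2.2 i) hh0 h2
    rw [dot_zero_add, h, dot_zero_add]
    have e5 : dot mO (fun i => ev x.2.2.2 (ρ i)) =
        ∑ j : Fin 22, ev mO (lk csi (lk x.2.2.1 j)) * ev x.2.2.2 (lk x.2.2.1 (lk csi j)) := by
      unfold dot
      rw [← Equiv.sum_comp (s⁻¹ * β)]
      apply Finset.sum_congr rfl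
      intro j _
      beta_reduce
      rw [← Perm.mul_apply ρ, e, ← eβ, ← csi_code hc, lk_code, lk_code, lk_code, lk_code]
      rfl
    have e6 : dot mO (fun i => ev x.2.2.2 (β i)) =
        ∑ j : Fin 22, ev mO j * ev x.2.2.2 (lk x.2.2.1 j) := by
      unfold dot
      simp only [← eβ, lk_code]
    rw [e5, e6, ← Finset.sum_add_distrib, h3]; rfl

/-! ### involutions -/

/-- image condition, up to complement -/
def imB (S x : ℕ) : Bool := decide (∀ i : Fin 22, ev S (lk x i) = ev mO i) ||
  decide (∀ i : Fin 22, ev S (lk x i) = 1 + ev mO i)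

theorem imB_spec {S : ℕ} {x : Perm (Fin 22)} (h : imB S (code x) = true) {u : Vec} (h0 : ev0 u) :
    dot mO (fun i => u (x i)) = dot S u := by
  have h0' := ev0_comp h0 x
  unfold ev0 at h0'
  unfold dot
  rw [← Equiv.sum_comp x (fun i => ev S i * u i)]
  simp only [imB, Bool.or_eq_true, decide_eq_true_eq, lk_code] at h
  rcases h with h | h
  · simp only [h]
  · simp only [h, add_mul, Finset.sum_add_distrib, one_mul, h0', zero_add]

theorem ckIO : ivO.all (fun x => imB x.1 x.2.1 &&
    Nat.beq (mulc ctr (mulc x.2.1 (mulc csi x.2.2))) (mulc x.2.1 (mulc x.2.2 csi))) = true := by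
  decide +kernel

theorem invO {r : Perm (Fin 22)} (hr : code r = ctr) {x : ℕ × ℕ × ℕ} (hx : x ∈ ivO) {u : Vec}
    (h0 : ev0 u) (hd : dot x.1 u = 0) : IsC u r := by
  obtain ⟨s, hs, hc⟩ := sM
  obtain ⟨k, hk, ek⟩ := mem_InM (c := x.2.1) (by
    have : x.2.1 ∈ ivO.map (fun x => x.2.1) := List.mem_map_of_mem (f := fun x => x.2.1) hx
    simp only [allL, List.mem_append, this, or_true, true_or])
  obtain ⟨β, hβ, eβ⟩ := mem_InM (c := x.2.2) (by
    have : x.2.2 ∈ ivO.map (fun x => x.2.2) := List.mem_map_of_mem (f := fun x => x.2.2) hx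
    simp only [allL, List.mem_append, this, or_true, true_or])
  have ck := List.all_eq_true.1 ckIO x hx
  simp only [Bool.and_eq_true, beq_iff] at ck
  obtain ⟨h2, h1⟩ := ck
  rw [← hr, ← ek, ← eβ] at h1
  rw [← ek] at h2
  have e := com11' hc h1
  apply IsC.conj hk (ρ' := k⁻¹ * r * k) (by group)
  apply com11 hc hs hβ e (v := 0) (ev0_comp h0 k) ev0_zero
  simpa [imB_spec h2 h0] using hd

theorem ckIP : IP.all (fun x => Nat.beq (mulc ctr x.2) (mulc x.2 ctr) &&
    decide (∀ i : Fin 22, ev (3 <<< (2 * x.1)) (lk x.2 i) = ev 768 i)) = true := by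
  decide +kernel

theorem invP {r : Perm (Fin 22)} (hr : code r = ctr) {u : Vec}
    (h0 : ev0 u) (hd : dot 768 u = 0) : IsC u r := by
  obtain ⟨a, ha, ea⟩ := alM
  obtain ⟨b, hb, eb⟩ := beM
  refine span ha hb ?_ (shape h0 hd shP) evVP evWP ?_
  · apply code_inj
    rw [code_mul, code_mul, code_mul, ea, eb, hr]
    decide +kernel
  · intro j i
    rw [relP, ← ea, ← eb, ← hr, lk_code, lk_code, lk_code]

theorem invP' {r : Perm (Fin 22)} (hr : code r = ctr) {x : ℕ × ℕ} (hx : x ∈ IP) {u : Vec}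
    (h0 : ev0 u) (hd : dot (3 <<< (2 * x.1)) u = 0) : IsC u r := by
  obtain ⟨k, hk, ek⟩ := mem_InM (c := x.2) (by
    have : x.2 ∈ IP.map (fun x => x.2) := List.mem_map_of_mem (f := fun x => x.2) hx
    simp only [allL, List.mem_append, this, or_true, true_or])
  have ck := List.all_eq_true.1 ckIP x hx
  simp only [Bool.and_eq_true, beq_iff, decide_eq_true_eq] at ck
  obtain ⟨h1, h2⟩ := ck
  apply IsC.conj hk (ρ' := r)
  · apply code_inj; rw [code_mul, code_mul, ek, hr, h1]
  apply invP hr (ev0_comp h0 k)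
  rw [← hd]
  unfold dot
  rw [← Equiv.sum_comp k (fun i => ev (3 <<< (2 * x.1)) i * u i)]
  simp only [← h2, ← ek, lk_code]

def invS : List ℕ := ivO.map (fun x => x.1) ++ IP.map (fun x => 3 <<< (2 * x.1))

theorem ckInv : (∀ i : Fin 22, (invS.map fun m => ev m i).sum = 0) ∨
    (∀ i : Fin 22, (invS.map fun m => ev m i).sum = 1) := by decide +kernel

theorem list_dot (l : List ℕ) (u : Vec) :
    (l.map fun m => dot m u).sum = ∑ i : Fin 22, (l.map fun m => ev m i).sum * u i := by
  induction l with
  | nil => simp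
  | cons a l ih =>
    simp only [List.map_cons, List.sum_cons, add_mul, Finset.sum_add_distrib, ih]
    rfl

theorem inv_all {r : Perm (Fin 22)} (hr : code r = ctr) {u : Vec} (h0 : ev0 u) : IsC u r := by
  by_contra hn
  have h1 : ∀ m ∈ invS, dot m u = 1 := by
    intro m hm
    rcases zcase (dot m u) with h | h
    · exfalso
      rcases List.mem_append.1 hm with hm | hm
      · obtain ⟨x, hx, rfl⟩ := List.mem_map.1 hm
        exact hn (invO hr hx h0 h)
      · obtain ⟨x, hx, rfl⟩ := List.mem_map.1 hm
        exact hn (invP' hr hx h0 h)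
    · exact h
  have h2 := list_dot invS u
  rw [List.map_congr_left h1] at h2
  have h3 : (invS.map fun _ => (1 : ZMod 2)).sum = 1 := by decide +kernel
  rw [h3] at h2
  rcases ckInv with h | h
  · simp [h] at h2
  · unfold ev0 at h0
    simp [h, h0] at h2

theorem rep_all {r : Perm (Fin 22)} (hr : code r ∈ RL) {u : Vec} (h0 : ev0 u) : IsC u r := by
  have := List.all_eq_true.1 RL_FT _ hr
  simp only [Bool.or_eq_true, beq_iff, List.any_eq_true] at this
  rcases this with h | ⟨x, hx, h⟩
  · exact inv_all h h0
  · exact nonInv hx h.symm h0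

theorem nonId {σ : Perm (Fin 22)} (h : σ ∈ M) (h1 : σ ≠ 1) {u : Vec} (h0 : ev0 u) : IsC u σ := by
  obtain ⟨k, hk, r, hr, hr', e⟩ := classify h h1
  exact IsC.conj hk e (rep_all hr' (ev0_comp h0 k))

end MH

namespace MH

open Equiv

/-! ### trivial permutation part -/

def otS (l : ℕ) : ℕ := (OT.getD l (0, 0)).1

theorem ckOT : OT.all (fun x => imB x.1 x.2) = true := by decide +kernel
theorem ckPT : ∀ k : Fin 11, (∑ l : Fin 12, ev (nt PT k) l = 0) ∧ ∀ i : Fin 22,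
    kd i (2 * k) + kd i (2 * k + 1) = 1 + ∑ l : Fin 12, ev (nt PT k) l * ev (otS l) i := by
  decide +kernel
theorem ckOT' : ∀ l : Fin 12, ∃ x ∈ OT, x.1 = otS l := by decide +kernel

theorem idO {x : ℕ × ℕ} (hx : x ∈ OT) {u : Vec} (h0 : ev0 u) (hd : dot x.1 u = 0) : IsC u 1 := by
  obtain ⟨s, hs, hc⟩ := sM
  obtain ⟨k, hk, ek⟩ := mem_InM (c := x.2) (by
    have : x.2 ∈ OT.map (fun x => x.2) := List.mem_map_of_mem (f := fun x => x.2) hx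
    simp only [allL, List.mem_append, this, or_true, true_or])
  have h2 := List.all_eq_true.1 ckOT x hx
  rw [← ek] at h2
  apply IsC.conj hk (ρ' := 1) (by simp)
  obtain ⟨w, hw, hw'⟩ := sol11 hc (ev0_comp h0 k) ((imB_spec h2 h0).trans hd)
  exact ⟨s, hs, 1, M.one_mem, 0, w, ev0_zero, hw, by simp, fun i => by simpa using hw' i⟩

theorem kd_comm (a b : ℕ) : kd a b = kd b a := by
  simp only [kd, beq_iff]; exact if_congr eq_comm rfl rfl

theorem kd_fin {n : ℕ} (k l : Fin n) : kd k l = if k = l then 1 else 0 := by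
  simp only [kd, beq_iff]; exact if_congr Fin.ext_iff.symm rfl rfl

theorem ev_zero (x : ℕ) : ev 0 x = 0 := by simp [ev]

theorem pair_sum (u : Vec) (k : Fin 11)
    (h : ∑ i : Fin 22, (kd i (2 * k) + kd i (2 * k + 1)) * u i = 0) :
    u (pt k) + u ⟨2 * k + 1, by omega⟩ = 0 := by
  have a1 := kd_sum u (pt k)
  have a2 := kd_sum u ⟨2 * k + 1, by omega⟩
  simp only [pt] at a1 a2 ⊢
  rw [← a1, ← a2, ← h, ← Finset.sum_add_distrib]
  apply Finset.sum_congr rfl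
  intro i _
  rw [kd_comm _ i, kd_comm _ i]; ring

theorem block_sum (m : ℕ) (A : Fin 11 → ZMod 2) :
    dot m (fun i => A (bk i)) = ∑ k : Fin 11, A k * ∑ i : Fin 22, ev m i * kd k (i / 2) := by
  unfold dot
  simp only [Finset.mul_sum]
  rw [Finset.sum_comm]
  apply Finset.sum_congr rfl
  intro i _
  have : ∀ k : Fin 11, A k * (ev m i * kd k ((i : ℕ) / 2)) = if k = bk i then ev m i * A k else 0 := by
    intro k
    have : kd k ((i : ℕ) / 2) = if k = bk i then 1 else 0 := kd_fin k (bk i)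
    rw [this]
    split <;> ring
  simp only [this, Finset.sum_ite_eq', Finset.mem_univ, if_true]

def m8 : ℕ := 2 ^ 2 + 2 ^ 18 + 2 ^ 4 + 2 ^ 20 + 2 ^ 14 + 2 ^ 12 + 2 ^ 8 + 2 ^ 16

theorem shD : ∀ j i : Fin 22, ev (nt BD j) i = kd (2 * (i / 2)) j + kd j 0 * kd (i / 2) 0 +
    kd j 10 * kd (i / 2) 5 + kd (i / 2) 1 * ev m8 j := by decide +kernel
theorem blO : ∀ k : Fin 11, ∑ i : Fin 22, ev mO i * kd k (i / 2) = 1 := by decide +kernel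
theorem bl8 : ∀ k : Fin 11, ∑ i : Fin 22, ev m8 i * kd k (i / 2) = 
    1 + kd k 0 + kd k 3 + kd k 5 := by decide +kernel

theorem idD {A : Fin 11 → ZMod 2} (h0 : A 0 = 0) (h5 : A 5 = 0) (h3 : A 3 = 1)
    (hs : ∑ k, A k = 1) : IsC (fun i => A (bk i)) 1 := by
  obtain ⟨d, hd, ed⟩ := deM
  refine span hd M.one_mem (by simp) (B := nt BD) (V := fun _ => 0) (W := nt WD) ?_ ?_ evWD ?_
  · intro i
    have e : ∀ j : Fin 22, A (bk j) * ev (nt BD j) i = A (bk j) * kd (pt (bk i)) j +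
        (A (bk j) * kd (0 : Fin 22) j) * kd (i / 2) 0 +
        (A (bk j) * kd (10 : Fin 22) j) * kd (i / 2) 5 +
        kd (i / 2) 1 * (ev m8 j * A (bk j)) := by
      intro j
      rw [shD]
      rw [kd_comm j 0, kd_comm j 10]
      change A (bk j) * (kd (2 * (i / 2)) j + kd 0 j * kd (i / 2) 0 +
        kd 10 j * kd (i / 2) 5 + kd (i / 2) 1 * ev m8 j) = A (bk j) * kd (2 * (i / 2)) j +
        (A (bk j) * kd 0 j) * kd (i / 2) 0 + (A (bk j) * kd 10 j) * kd (i / 2) 5 +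
        kd (i / 2) 1 * (ev m8 j * A (bk j))
      ring
    have e8 : dot m8 (fun i => A (bk i)) = 0 := by
      rw [block_sum]
      have : ∀ k : Fin 11, A k * (1 + kd k 0 + kd k 3 + kd k 5) = A k + (if k = 0 then A k else 0)
          + (if k = 3 then A k else 0) + (if k = 5 then A k else 0) := by
        intro k
        have t0 : kd k 0 = if k = 0 then 1 else 0 := kd_fin k 0
        have t3 : kd k 3 = if k = 3 then 1 else 0 := kd_fin k 3
        have t5 : kd k 5 = if k = 5 then 1 else 0 := kd_fin k 5
        rw [t0, t3, t5]
        simp only [mul_add, mul_ite, mul_one, mul_zero]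
      simp only [bl8, this, Finset.sum_add_distrib, Finset.sum_ite_eq', Finset.mem_univ, if_true,
        hs, h0, h3, h5]
      rfl
    unfold dot at e8
    simp only [e, Finset.sum_add_distrib, ← Finset.mul_sum, ← Finset.sum_mul]
    rw [kd_sum (fun j => A (bk j)) (pt (bk i)), kd_sum (fun j => A (bk j)) 0,
      kd_sum (fun j => A (bk j)) 10, e8, bk_pt]
    change _ = A (bk i) + A 0 * _ + A 5 * _ + _
    rw [h0, h5]; ring
  · intro j; simp [ev]
  · intro j i
    rw [relD, ← ed, lk_code]
    simp only [ev_zero, Perm.one_apply, zero_add, add_zero]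

theorem exists4 (a b c : Fin 11) : ∃ d, d ≠ a ∧ d ≠ b ∧ d ≠ c := by revert a b c; decide +kernel

theorem exists3 (a b : Fin 22) : ∃ d, d ≠ a ∧ d ≠ b := by revert a b; decide +kernel

theorem idAll {u : Vec} (h0 : ev0 u) (hne : u ≠ fun _ => 1) : IsC u 1 := by
  by_contra hn
  have h1 : ∀ x ∈ OT, dot x.1 u = 1 := by
    intro x hx
    rcases zcase (dot x.1 u) with h | h
    · exact absurd (idO hx h0 h) hn
    · exact h
  have h2 : ∀ l : Fin 12, dot (otS l) u = 1 := by
    intro l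
    obtain ⟨x, hx, e⟩ := ckOT' l
    rw [← e]; exact h1 x hx
  have h3 : ∀ k : Fin 11, ∑ i : Fin 22, (kd i (2 * k) + kd i (2 * k + 1)) * u i = 0 := by
    intro k
    simp only [(ckPT k).2, add_mul, one_mul, Finset.sum_add_distrib]
    unfold ev0 at h0
    rw [h0, zero_add]
    simp only [Finset.sum_mul]
    rw [Finset.sum_comm]
    simp only [mul_assoc, ← Finset.mul_sum]
    change ∑ l : Fin 12, ev (nt PT k) l * dot (otS l) u = 0
    simp only [h2, mul_one, (ckPT k).1]
  have h4 : ∀ i : Fin 22, u i = u (pt (bk i)) := by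
    have h5 := fun k => pair_sum u k (h3 k)
    intro i
    have h6 := h5 (bk i)
    have : i = pt (bk i) ∨ i = ⟨2 * bk i + 1, by omega⟩ := by
      simp only [Fin.ext_iff, pt, bk]; omega
    rcases this with h | h
    · rw [← h]
    · rw [← h] at h6
      linear_combination z2 (u i) - h6
  set A : Fin 11 → ZMod 2 := fun k => u (pt k) with hA
  have huA : u = fun i => A (bk i) := funext h4
  have hs : ∑ k, A k = 1 := by
    have := h1 (1480105, 877989843404692497019985071278112) (by simp [OT])
    change dot mO u = 1 at this
    rw [huA, block_sum] at this
    simpa only [blO, mul_one] using this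
  obtain ⟨p, hp⟩ : ∃ p, A p = 0 := by
    by_contra hh
    push Not at hh
    apply hne
    rw [huA]
    funext i
    exact (zcase _).resolve_left (hh _)
  obtain ⟨y, hy⟩ : ∃ y, A y = 1 := by
    by_contra hh
    push Not at hh
    rw [Finset.sum_eq_zero (fun k _ => (zcase _).resolve_right (hh k))] at hs
    exact absurd hs (by decide)
  obtain ⟨q, hq, hqp⟩ : ∃ q, A q = 0 ∧ q ≠ p := by
    by_contra hh
    push Not at hh
    have : ∀ k, A k = if k = p then 0 else 1 := by
      intro k
      split
      · rename_i h; rw [h, hp]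
      · rename_i h; exact (zcase _).resolve_left (fun h' => h (hh k h'))
    simp only [this] at hs
    revert hs
    clear * -
    revert p
    decide +kernel
  have py : p ≠ y := by rintro rfl; rw [hp] at hy; exact absurd hy (by decide)
  have qy : y ≠ q := by rintro rfl; rw [hq] at hy; exact absurd hy (by decide)
  obtain ⟨d, d1, d2, d3⟩ := exists4 p y q
  obtain ⟨g, hg, g0, g1, g2, -⟩ := trans4 p y q d py hqp.symm d1.symm qy d2.symm d3.symm
  obtain ⟨f, hf, f0, f1, f2, -⟩ := trans4 0 3 5 1 (by decide) (by decide) (by decide) (by decide)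
    (by decide) (by decide)
  have hm := M.mul_mem hg (M.inv_mem hf)
  have b0 : bl (g * f⁻¹) 0 = p := by rw [bl_mul hg, bl_inv hf f0, g0]
  have b3 : bl (g * f⁻¹) 3 = y := by rw [bl_mul hg, bl_inv hf f1, g1]
  have b5 : bl (g * f⁻¹) 5 = q := by rw [bl_mul hg, bl_inv hf f2, g2]
  apply hn
  apply IsC.conj hm (ρ' := 1) (by simp)
  have e : (fun i => u ((g * f⁻¹) i)) = fun i => A (bl (g * f⁻¹) (bk i)) := by
    funext i; rw [bl_bk hm, h4]
  rw [e]
  apply idD (A := fun k => A (bl (g * f⁻¹) k))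
  · rw [b0, hp]
  · rw [b5, hq]
  · rw [b3, hy]
  · rw [Function.Bijective.sum_comp (Finite.injective_iff_bijective.1 (bl_inj hm)) A]
    exact hs

/-! ### the central element is not a commutator -/

def siB (S c : ℕ) : Bool := decide (∀ i : Fin 22, ev S (lk c i) = ev S i) ||
  decide (∀ i : Fin 22, ev S (lk c i) = 1 + ev S i)

theorem siB_spec {S : ℕ} {x : Perm (Fin 22)} (h : siB S (code x) = true) {u : Vec} (h0 : ev0 u) :
    dot S (fun i => u (x i)) = dot S u := by
  have h0' := ev0_comp h0 x
  unfold ev0 at h0'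
  unfold dot
  rw [← Equiv.sum_comp x (fun i => ev S i * u i)]
  simp only [siB, Bool.or_eq_true, decide_eq_true_eq, lk_code] at h
  rcases h with h | h
  · simp only [h]
  · simp only [h, add_mul, Finset.sum_add_distrib, one_mul, h0', zero_add]

def allC (r : ℕ) (g : ℕ → Bool) : Bool := T1.all fun a => T2.all fun b =>
  !(Nat.beq (lk (mulc a b) 2 / 2) (lk r (2 * (lk (mulc a b) 0 / 2)) / 2)) ||
  T3.all fun c => (Nat.beq (lk r 2 / 2) 2 && !(Nat.beq (lk (mulc (mulc a b) c) 4 / 2)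
    (lk r (2 * (lk (mulc (mulc a b) c) 2 / 2)) / 2))) ||
  T4.all fun d => g (mulc (mulc (mulc a b) c) d)

theorem allC_spec {g : ℕ → Bool} {r : Perm (Fin 22)} (h : allC (code r) g = true) (hr : r ∈ M)
    (h1 : bl r 0 = 1) {σ : Perm (Fin 22)} (hσ : σ ∈ M) (e : σ * r = r * σ) :
    g (code σ) = true := by
  obtain ⟨x, hx, y, hy, z, hz, w, hw, e', -, k0, k1, -, q1, q2⟩ := enum hσ
  have h2 := List.all_eq_true.1 (List.all_eq_true.1 h x hx) y hy
  have h3 : bl σ 1 = bl r (bl σ 0) := by rw [← h1, ← bl_mul hσ, e, bl_mul hr]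
  rw [← k1, ← k0, h3, ← bl_code, Nat.beq_refl] at h2
  simp only [Bool.not_true, Bool.false_or] at h2
  rw [e']
  have h5 := List.all_eq_true.1 h2 z hz
  rw [Bool.or_eq_true] at h5
  rcases h5 with h5 | h5
  · exfalso
    rw [Bool.and_eq_true, beq_iff] at h5
    have h6 : bl r 1 = 2 := by ext; rw [bl_code]; exact h5.1
    have h7 : bl σ 2 = bl r (bl σ 1) := by rw [← h6, ← bl_mul hσ, e, bl_mul hr]
    have h8 := h5.2
    rw [← q1, ← q2, h7, ← bl_code, Nat.beq_refl] at h8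
    exact absurd h8 (by decide)
  · exact List.all_eq_true.1 h5 w hw

def stB (x : ℕ × List ℕ) : Bool := Nat.beq (lk x.1 0 / 2) 1 &&
  (x.2.all fun S => decide (∑ i : Fin 22, ev S i = 1) && siB S x.1) &&
  allC x.1 fun y => !(Nat.beq (lk y (lk x.1 4)) (lk x.1 (lk y 4))) || !(Nat.beq (mulc y x.1) (mulc x.1 y)) || x.2.any fun S => siB S y

theorem ckST : ST.all stB = true := by decide +kernel
theorem ckRS : RL.all (fun r => ST.any fun x => Nat.beq r x.1) = true := by decide +kernel

theorem noT1 {r β : Perm (Fin 22)} (hr : r ∈ M) (hc : code r ∈ RL) (hβ : β ∈ M)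
    (e : β * r = r * β) {v w : Vec} (hv : ev0 v) (hw : ev0 w)
    (h : ∀ i, 1 = v i + w (r i) + w i + v (β i)) : False := by
  have h1 := List.all_eq_true.1 ckRS _ hc
  simp only [List.any_eq_true, beq_iff] at h1
  obtain ⟨x, hx, ex⟩ := h1
  have h2 := List.all_eq_true.1 ckST x hx
  unfold stB at h2
  rw [Bool.and_eq_true, Bool.and_eq_true] at h2
  obtain ⟨⟨h2, h3⟩, h4⟩ := h2
  rw [← ex] at h2 h3 h4
  have hb : bl r 0 = 1 := by
    ext; rw [bl_code]; exact (beq_iff _ _).1 h2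
  have h5 := allC_spec h4 hr hb hβ e
  have h9 : lk (code β) (lk (code r) 4) = lk (code r) (lk (code β) 4) := by
    have a1 := lk_code r 4
    have a2 := lk_code β 4
    change lk (code r) 4 = _ at a1
    change lk (code β) 4 = _ at a2
    rw [a1, a2, lk_code, lk_code, ← Perm.mul_apply, e, Perm.mul_apply]
  rw [← code_mul, ← code_mul, e, h9, Nat.beq_refl, Nat.beq_refl] at h5
  simp only [Bool.not_true, Bool.false_or, List.any_eq_true] at h5
  obtain ⟨S, hS, h6⟩ := h5
  have h7 := List.all_eq_true.1 h3 S hS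
  simp only [Bool.and_eq_true, decide_eq_true_eq] at h7
  have h8 : dot S (fun i => v i + w (r i) + w i + v (β i)) = 0 := by
    rw [dot_zero_add, dot_zero_add, dot_zero_add, siB_spec h6 hv, siB_spec h7.2 hw]
    linear_combination z2 (dot S v) + z2 (dot S w)
  simp only [← h] at h8
  unfold dot at h8
  simp only [mul_one] at h8
  rw [h7.1] at h8
  exact absurd h8 (by decide)

theorem noT2 {α β : Perm (Fin 22)} (hα : α ∈ M) (h1 : α ≠ 1) (hβ : β ∈ M)
    (e : β * α = α * β) {v w : Vec} (hv : ev0 v) (hw : ev0 w)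
    (h : ∀ i, 1 = v i + w (α i) + w i + v (β i)) : False := by
  obtain ⟨k, hk, r, hr, hr', ek⟩ := classify hα h1
  have hr2 : r = k⁻¹ * α * k := by rw [mul_assoc, ek]; group
  refine noT1 hr hr' (β := k⁻¹ * β * k) (M.mul_mem (M.mul_mem (M.inv_mem hk) hβ) hk) ?_
    (ev0_comp hv k) (ev0_comp hw k) ?_
  · rw [hr2]
    calc _ = k⁻¹ * (β * α) * k := by group
      _ = _ := by rw [e]; group
  · intro i
    rw [hr2]
    simpa using h (k i)

theorem noT : ¬ IsC (fun _ => 1) 1 := by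
  rintro ⟨α, hα, β, hβ, v, w, hv, hw, e, h⟩
  simp only [mul_one, Perm.one_apply] at e h
  by_cases h1 : α = 1
  · by_cases h2 : β = 1
    · have := h 0
      rw [h1, h2] at this
      simp only [Perm.one_apply] at this
      have h3 : (1 : ZMod 2) = 0 := by linear_combination this + z2 (v 0) + z2 (w 0)
      exact absurd h3 (by decide)
    · exact noT2 hβ h2 hα e.symm hw hv (fun i => by rw [h i]; ring)
  · exact noT2 hα h1 hβ e hv hw h

/-! ### the center -/

theorem one_ev : ev0 (fun _ => 1) := by unfold ev0; decide +kernel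

def tt : GMacHale := ⟨tr (fun _ => 1) 1, tr_mem one_ev M.one_mem⟩

theorem φ_tt : φ tt = el (fun _ => 1) 1 := φ_tr _ _

theorem tt_ne : tt ≠ 1 := by
  intro h
  have := φ_tt
  rw [h, Subgroup.coe_one, map_one, ← el_one] at this
  have := congrFun (el_inj this).1 0
  exact absurd this (by decide)

theorem tt_center : tt ∈ Subgroup.center GMacHale := by
  rw [Subgroup.mem_center_iff]
  intro g
  obtain ⟨v, σ, hv, hσ, e⟩ := sub1 g.2
  apply Subtype.ext
  apply φ.injective
  rw [Subgroup.coe_mul, Subgroup.coe_mul, map_mul, map_mul, e, φ_tt, el_mul, el_mul]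
  congr 1
  funext i
  simp [add_comm]

theorem center_cases {z : GMacHale} (hz : z ∈ Subgroup.center GMacHale) (h1 : z ≠ 1) : z = tt := by
  rw [Subgroup.mem_center_iff] at hz
  obtain ⟨u, ρ, hu, hρ, e⟩ := sub1 z.2
  have key : ∀ v σ, ev0 v → σ ∈ M → (∀ i, u i + v (ρ i) = v i + u (σ i)) := by
    intro v σ hv hσ i
    have := congrArg (fun y : GMacHale => φ (y : Perm (Fin 44))) (hz ⟨tr v σ, tr_mem hv hσ⟩)
    simp only [Subgroup.coe_mul, map_mul, φ_tr, e, el_mul] at this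
    exact congrFun (el_inj this).1 i
  have hρ1 : ρ = 1 := by
    by_contra hne
    obtain ⟨i, hi⟩ : ∃ i, ρ i ≠ i := by
      by_contra hh
      push Not at hh
      exact hne (Equiv.ext hh)
    obtain ⟨j, hj1, hj2⟩ : ∃ j : Fin 22, j ≠ i ∧ j ≠ ρ i := by
      exact exists3 _ _
    have hv : ev0 (dl i + dl j) := by
      unfold ev0; simp only [Pi.add_apply, Finset.sum_add_distrib, dl_sum]; rfl
    have := key _ 1 hv M.one_mem i
    simp [dl, hi, hj1.symm, hj2.symm] at this
  subst hρ1
  have hc : ∀ σ ∈ M, ∀ i, u (σ i) = u i := by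
    intro σ hσ i
    have := key 0 σ ev0_zero hσ i
    simpa using this.symm
  have hr : ∀ i, u i = u 0 := reach (C := fun i => u i = u 0) rfl
    (fun i h => by rw [hc _ σ3_mem, h]) (fun i h => by rw [hc _ σ4_mem, h])
  have hu' : u = fun _ => u 0 := funext hr
  rcases zcase (u 0) with h | h
  · exfalso
    apply h1
    apply Subtype.ext
    apply φ.injective
    rw [e, hu', h, Subgroup.coe_one, map_one, ← el_one]; rfl
  · apply Subtype.ext
    apply φ.injective
    rw [e, hu', h, φ_tt]

theorem main :
    ∃ t : GMacHale,
      (¬ ∃ a b : GMacHale, t = a⁻¹ * b⁻¹ * a * b) ∧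
      (∀ x : GMacHale, (¬ ∃ a b : GMacHale, x = a⁻¹ * b⁻¹ * a * b) → x = t) ∧
      t ∈ Subgroup.center GMacHale ∧ t ≠ 1 ∧
      ∀ z ∈ Subgroup.center GMacHale, z ≠ 1 → z = t := by
  refine ⟨tt, ?_, ?_, tt_center, tt_ne, fun z hz h1 => center_cases hz h1⟩
  · rw [comm_iff _ _ tt φ_tt]; exact noT
  · intro x hx
    obtain ⟨u, ρ, hu, hρ, e⟩ := sub1 x.2
    rw [comm_iff u ρ x e] at hx
    by_cases h1 : ρ = 1
    · subst h1
      by_cases h2 : u = fun _ => 1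
      · subst h2
        apply Subtype.ext
        apply φ.injective
        rw [e, φ_tt]
      · exact absurd (idAll hu h2) hx
    · exact absurd (nonId hρ h1 hu) hx

end MH

/-- The unique noncommutator of the group `G_MacHale` is its unique nonidentity
central element. -/
theorem stmt_15 :
    ∃ t : GMacHale,
      (¬ ∃ a b : GMacHale, t = a⁻¹ * b⁻¹ * a * b) ∧
      (∀ x : GMacHale, (¬ ∃ a b : GMacHale, x = a⁻¹ * b⁻¹ * a * b) → x = t) ∧
      t ∈ Subgroup.center GMacHale ∧ t ≠ 1 ∧
      ∀ z ∈ Subgroup.center GMacHale, z ≠ 1 → z = t := by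
  exact MH.main
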